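/- arXiv:2106.05464 — 2 statements merged into one kernel-verified Lean document; each statement's English description precedes it below -/
import Mathlib

section
/- Let ψ be a state on M_m of the form ψ(x) = tr_m(xh), where h is a positive m×m matrix all of whose eigenvalues are strictly positive rational numbers. Then there exist p ∈ ℕ and ucp maps S : M_m → M_p and T : M_p → M_m such that tr_p∘S = ψ, ψ∘T = tr_p, and ‖x − T(S(x))‖_ψ^♯ ≤ ‖h^{1/2}x − xh^{1/2}‖₂ for all x ∈ M_m. -/
open scoped ComplexOrder

noncomputable section

/-- A von Neumann algebra is closed under the complex scalar action. -/
instance VonNeumannAlgebra.instSMulMemClass {H : Type*} [NormedAddCommGroup H]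
    [InnerProductSpace ℂ H] [CompleteSpace H] :
    SMulMemClass (VonNeumannAlgebra H) ℂ (H →L[ℂ] H) :=
  ⟨fun {s} c _ ha => s.toStarSubalgebra.smul_mem ha c⟩

/-- An element of a `*`-ring is positive if it is of the form `star z * z`. -/
def IsPosElem {A : Type*} [Mul A] [Star A] (x : A) : Prop :=
  ∃ z : A, x = star z * z

/-- A linear map between complex `*`-algebras is completely positive if all of its
matrix amplifications map positive elements to positive elements. -/
def IsCPMap {A B : Type*} [Ring A] [StarRing A] [Algebra ℂ A]
    [Ring B] [StarRing B] [Algebra ℂ B] (Φ : A →ₗ[ℂ] B) : Prop :=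
  ∀ (k : ℕ) (x : Matrix (Fin k) (Fin k) A), IsPosElem x → IsPosElem (x.map Φ)

/-- A unital completely positive map. -/
def IsUCPMap {A B : Type*} [Ring A] [StarRing A] [Algebra ℂ A]
    [Ring B] [StarRing B] [Algebra ℂ B] (Φ : A →ₗ[ℂ] B) : Prop :=
  Φ 1 = 1 ∧ IsCPMap Φ

/-- A state on a complex `*`-algebra: unital and positive. -/
def IsState {A : Type*} [Ring A] [StarRing A] [Algebra ℂ A] (φ : A →ₗ[ℂ] ℂ) : Prop :=
  φ 1 = 1 ∧ ∀ x : A, 0 ≤ φ (star x * x)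

/-- A positive linear map is faithful if `Φ (star x * x) = 0` implies `x = 0`. -/
def IsFaithfulPosMap {A B : Type*} [Ring A] [StarRing A] [Algebra ℂ A]
    [AddCommMonoid B] [Module ℂ B] (Φ : A →ₗ[ℂ] B) : Prop :=
  ∀ x : A, Φ (star x * x) = 0 → x = 0

/-- The normalized trace `tr_m` on `m × m` complex matrices. -/
def trNorm (m : ℕ) (x : Matrix (Fin m) (Fin m) ℂ) : ℂ :=
  x.trace / (m : ℂ)

/-- `‖x‖_φ = φ(x* x)^{1/2}`. -/
def stateNorm {A : Type*} [Ring A] [StarRing A] [Algebra ℂ A]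
    (φ : A →ₗ[ℂ] ℂ) (x : A) : ℝ :=
  Real.sqrt (φ (star x * x)).re

/-- A matrix is positive with strictly positive rational eigenvalues if it is unitarily
conjugate to a diagonal matrix with strictly positive rational diagonal entries. -/
def HasPosRatEigenvalues {m : ℕ} (h : Matrix (Fin m) (Fin m) ℂ) : Prop :=
  ∃ (U : Matrix (Fin m) (Fin m) ℂ) (d : Fin m → ℚ),
    U ∈ Matrix.unitaryGroup (Fin m) ℂ ∧ (∀ i, 0 < d i) ∧
      h = star U * Matrix.diagonal (fun i => ((d i : ℂ))) * U

/-- `‖x‖_ψ^♯ = ψ((x* x + x x*)/2)^{1/2}`. -/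
def stateSharpNorm {A : Type*} [Ring A] [StarRing A] [Algebra ℂ A]
    (ψ : A →ₗ[ℂ] ℂ) (x : A) : ℝ :=
  Real.sqrt ((ψ (star x * x + x * star x)).re / 2)

/-- The Hilbert–Schmidt norm with respect to the normalized trace. -/
def hsNorm (m : ℕ) (x : Matrix (Fin m) (Fin m) ℂ) : ℝ :=
  Real.sqrt ((trNorm m (star x * x)).re)

/-!
The density `h` is unitarily conjugate to a diagonal matrix, and conjugation by a unitary preserves
`tr_m`, so `h` may be taken diagonal, with entries `q i / N` for positive integers `q i` and `N`.
Then `∑ i, q i = m N` because `ψ` is unital, and `p = m N` indexes the diagonal of a block matrix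
with `q i × q j` blocks. The map `S` inflates each entry of `x` to a truncated identity block, and
`T` sums the diagonal of each block and divides by `√(q i q j)`; both are compositions of a
conjugation with the Schur product by a positive semidefinite matrix, hence completely positive.
The composition `T ∘ S` multiplies the entry `x i j` by `min (q i) (q j) / √(q i q j)`, which turns
the bound into one inequality between two positive reals for each pair of eigenvalues.
-/

open Matrix
open scoped Kronecker

section Positivity

theorem IsPosElem.map {A B F : Type*} [Mul A] [Star A] [Mul B] [Star B] [FunLike F A B]
    [MulHomClass F A B] [StarHomClass F A B] (f : F) {a : A} (ha : IsPosElem a) :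
    IsPosElem (f a) := by
  obtain ⟨z, rfl⟩ := ha
  exact ⟨f z, by rw [map_mul, map_star]⟩

variable {A B : Type*} [Ring A] [StarRing A] [Algebra ℂ A] [Ring B] [StarRing B] [Algebra ℂ B]

theorem IsUCPMap.of_starAlgHom (f : A →⋆ₐ[ℂ] B) : IsUCPMap f.toAlgHom.toLinearMap := by
  refine ⟨map_one f, ?_⟩
  rintro k _ ⟨z, rfl⟩
  refine ⟨z.map f, ?_⟩
  ext i j
  simp [mul_apply, star_apply, map_star]

theorem IsUCPMap.of_starAlgEquiv (f : A ≃⋆ₐ[ℂ] B) : IsUCPMap f.toAlgEquiv.toLinearMap :=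
  .of_starAlgHom (f : A →⋆ₐ[ℂ] B)

variable {C : Type*} [Ring C] [StarRing C] [Algebra ℂ C]

theorem IsCPMap.comp {Ψ : B →ₗ[ℂ] C} {Φ : A →ₗ[ℂ] B} (hΨ : IsCPMap Ψ) (hΦ : IsCPMap Φ) :
    IsCPMap (Ψ ∘ₗ Φ) :=
  fun k x hx => hΨ k (x.map Φ) (hΦ k x hx)

theorem IsUCPMap.comp {Ψ : B →ₗ[ℂ] C} {Φ : A →ₗ[ℂ] B} (hΨ : IsUCPMap Ψ) (hΦ : IsUCPMap Φ) :
    IsUCPMap (Ψ ∘ₗ Φ) :=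
  ⟨by rw [LinearMap.comp_apply, hΦ.1, hΨ.1], hΨ.2.comp hΦ.2⟩

end Positivity

section MatrixMaps

variable {ι κ : Type*} [Fintype ι] [Fintype κ]

open scoped MatrixOrder in
theorem isPosElem_iff_posSemidef {x : Matrix ι ι ℂ} : IsPosElem x ↔ x.PosSemidef := by
  classical
  rw [← nonneg_iff_posSemidef, CStarAlgebra.nonneg_iff_eq_star_mul_self, IsPosElem]

open scoped MatrixOrder in
theorem IsPosElem.eq_of_mul_self_eq {a b : Matrix ι ι ℂ} (ha : IsPosElem a) (hb : IsPosElem b)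
    (hab : a * a = b * b) : a = b := by
  classical
  exact (CFC.mul_self_eq_mul_self_iff a b (isPosElem_iff_posSemidef.mp ha).nonneg
    (isPosElem_iff_posSemidef.mp hb).nonneg).mp hab

theorem isPosElem_iff_posSemidef_comp {k : ℕ} {x : Matrix (Fin k) (Fin k) (Matrix ι ι ℂ)} :
    IsPosElem x ↔ (comp _ _ _ _ _ x).PosSemidef := by
  classical
  have comp_star_mul_self (z : Matrix (Fin k) (Fin k) (Matrix ι ι ℂ)) :
      comp _ _ _ _ _ (star z * z) = star (comp _ _ _ _ _ z) * comp _ _ _ _ _ z :=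
    map_mul (compRingEquiv (Fin k) ι ℂ) (star z) z
  rw [← isPosElem_iff_posSemidef, IsPosElem, IsPosElem, ← (comp _ _ _ _ _).exists_congr_right]
  simp only [← comp_star_mul_self, EmbeddingLike.apply_eq_iff_eq]

variable [DecidableEq ι] [DecidableEq κ]

theorem IsPosElem.eq_map_diagonal_sqrt {r : Matrix ι ι ℂ} (hr : IsPosElem r)
    {α : Matrix ι ι ℂ ≃⋆ₐ[ℂ] Matrix ι ι ℂ} {d : ι → ℝ}
    (hd : ∀ i, 0 ≤ d i) (hrr : r * r = α (diagonal fun i => (d i : ℂ))) :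
    r = α (diagonal fun i => (√(d i) : ℂ)) := by
  have sqrt_pos : IsPosElem (diagonal fun i => (√(d i) : ℂ)) := by
    rw [isPosElem_iff_posSemidef, posSemidef_diagonal_iff]
    exact fun i => Complex.zero_le_real.mpr (Real.sqrt_nonneg _)
  refine hr.eq_of_mul_self_eq (sqrt_pos.map α) ?_
  simp only [hrr, ← map_mul, diagonal_mul_diagonal, ← Complex.ofReal_mul,
    Real.mul_self_sqrt (hd _)]

/-- The conjugation map `x ↦ Vᴴ x V`. -/
def conjMap (V : Matrix ι κ ℂ) : Matrix ι ι ℂ →ₗ[ℂ] Matrix κ κ ℂ where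
  toFun x := Vᴴ * x * V
  map_add' x y := by rw [Matrix.mul_add, Matrix.add_mul]
  map_smul' c x := by simp

/-- The Schur multiplier `x ↦ E ⊙ x`, where `⊙` is the entrywise product. -/
def schurMultiplier (E : Matrix ι ι ℂ) : Matrix ι ι ℂ →ₗ[ℂ] Matrix ι ι ℂ where
  toFun x := E ⊙ x
  map_add' x y := hadamard_add E x y
  map_smul' c x := hadamard_smul E x c

theorem isCPMap_conjMap (V : Matrix ι κ ℂ) : IsCPMap (conjMap V) := by
  intro k x hx
  rw [isPosElem_iff_posSemidef_comp] at hx ⊢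
  let W := (1 : Matrix (Fin k) (Fin k) ℂ) ⊗ₖ V
  have comp_map_conjMap :
      comp _ _ _ _ _ (x.map (conjMap V)) = Wᴴ * comp _ _ _ _ _ x * W := by
    ext ⟨a, i⟩ ⟨b, j⟩
    simp [W, conjMap, mul_apply, Fintype.sum_prod_type, one_apply, apply_ite (starRingEnd ℂ)]
  exact comp_map_conjMap ▸ hx.conjTranspose_mul_mul_same W

theorem isCPMap_schurMultiplier {E : Matrix ι ι ℂ} (hE : E.PosSemidef) :
    IsCPMap (schurMultiplier E) := by
  intro k x hx
  rw [isPosElem_iff_posSemidef_comp] at hx ⊢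
  exact (hE.submatrix Prod.snd).hadamard hx

theorem trace_conjStarAlgAut (U : unitaryGroup ι ℂ) (x : Matrix ι ι ℂ) :
    (Unitary.conjStarAlgAut ℂ _ U x).trace = x.trace := by
  rw [Unitary.conjStarAlgAut_apply, trace_mul_comm, ← mul_assoc, Unitary.star_mul_self_of_mem U.2,
    one_mul]

theorem trace_star_mul_self_mul_diagonal (y : Matrix ι ι ℂ) (d : ι → ℝ) :
    (star y * y * diagonal fun i => (d i : ℂ)).trace =
      ((∑ i, ∑ j, ‖y i j‖ ^ 2 * d j : ℝ) : ℂ) := by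
  rw [Finset.sum_comm]
  simp only [trace, diag_apply, mul_diagonal, mul_apply (M := star y), star_apply, Complex.star_def,
    Complex.conj_mul', Finset.sum_mul]
  push_cast
  rfl

theorem trace_mul_star_self_mul_diagonal (y : Matrix ι ι ℂ) (d : ι → ℝ) :
    (y * star y * diagonal fun i => (d i : ℂ)).trace =
      ((∑ i, ∑ j, ‖y i j‖ ^ 2 * d i : ℝ) : ℂ) := by
  simp only [trace, diag_apply, mul_diagonal, mul_apply (M := y), star_apply, Complex.star_def,
    Complex.mul_conj', Finset.sum_mul]
  push_cast
  rfl

end MatrixMaps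

section Inflation

variable {ι : Type*} (q : ι → ℕ)

/-- The `0`-`1` matrix on `Σ i, Fin (q i)` relating `⟨i, a⟩` and `⟨j, b⟩` when `a` and `b` are the
same natural number. -/
def levelKernel : Matrix (Σ i, Fin (q i)) (Σ i, Fin (q i)) ℂ :=
  (1 : Matrix ℕ ℕ ℂ).submatrix (fun s => s.2) (fun s => s.2)

theorem posSemidef_levelKernel : (levelKernel q).PosSemidef :=
  PosSemidef.one.submatrix _

variable [Fintype ι] [DecidableEq ι]

/-- The map replacing each entry `x i j` by the `q i × q j` block with `x i j` on its main diagonal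
and zeros elsewhere. This is `S` for a diagonal density proportional to `q`. -/
def inflate : Matrix ι ι ℂ →ₗ[ℂ] Matrix (Σ i, Fin (q i)) (Σ i, Fin (q i)) ℂ :=
  schurMultiplier (levelKernel q) ∘ₗ conjMap ((1 : Matrix ι ι ℂ).submatrix id Sigma.fst)

/-- The map replacing each `q i × q j` block by the sum of its main diagonal, divided by
`√(q i * q j)`. This is `T` for a diagonal density proportional to `q`. -/
def deflate : Matrix (Σ i, Fin (q i)) (Σ i, Fin (q i)) ℂ →ₗ[ℂ] Matrix ι ι ℂ :=
  conjMap ((diagonal fun i => ((√(q i))⁻¹ : ℂ)).submatrix Sigma.fst id) ∘ₗ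
    schurMultiplier (levelKernel q)

variable {q}

theorem inflate_apply (x : Matrix ι ι ℂ) (s t : Σ i, Fin (q i)) :
    inflate q x s t = if (s.2 : ℕ) = t.2 then x s.1 t.1 else 0 := by
  simp [inflate, schurMultiplier, conjMap, levelKernel, mul_apply, one_apply]

theorem deflate_apply (y : Matrix (Σ i, Fin (q i)) (Σ i, Fin (q i)) ℂ) (i j : ι) :
    deflate q y i j =
      (∑ a : Fin (q i), ∑ b : Fin (q j), if (a : ℕ) = b then y ⟨i, a⟩ ⟨j, b⟩ else 0) /
        (√(q i) * √(q j)) := by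
  have sum_rows (b : Fin (q j)) :
      (∑ k, ∑ a : Fin (q k), if (a : ℕ) = b then
        if i = k then (√(q i) : ℂ)⁻¹ * y ⟨k, a⟩ ⟨j, b⟩ else 0 else 0) =
      (√(q i) : ℂ)⁻¹ * ∑ a : Fin (q i), if (a : ℕ) = b then y ⟨i, a⟩ ⟨j, b⟩ else 0 := by
    rw [Fintype.sum_eq_single i fun k hk => by simp [hk.symm]]
    simp [Finset.mul_sum]
  have deflate_eq_sum : deflate q y i j =
      ∑ b : Fin (q j), (√(q i) : ℂ)⁻¹ *
        (∑ a : Fin (q i), if (a : ℕ) = b then y ⟨i, a⟩ ⟨j, b⟩ else 0) * (√(q j) : ℂ)⁻¹ := by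
    simp only [← sum_rows]
    simp [deflate, schurMultiplier, conjMap, levelKernel, mul_apply, one_apply, diagonal_apply,
      Fintype.sum_sigma]
  rw [deflate_eq_sum, Finset.sum_comm, ← Finset.sum_mul, ← Finset.mul_sum]
  field_simp

theorem isUCPMap_inflate : IsUCPMap (inflate q) := by
  refine ⟨?_, (isCPMap_schurMultiplier (posSemidef_levelKernel q)).comp (isCPMap_conjMap _)⟩
  ext ⟨i, a⟩ ⟨j, b⟩
  rw [inflate_apply]
  by_cases hij : i = j
  · subst hij
    simp [one_apply, Fin.ext_iff]
  · simp [one_apply, hij]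

theorem sum_ite_val_eq_min (k l : ℕ) :
    (∑ a : Fin k, ∑ b : Fin l, if (a : ℕ) = b then (1 : ℂ) else 0) = min k l := by
  have sum_right (a : Fin k) :
      (∑ b : Fin l, if (a : ℕ) = b then (1 : ℂ) else 0) = if (a : ℕ) < l then 1 else 0 := by
    rw [Fin.sum_univ_eq_sum_range (fun b => if (a : ℕ) = b then (1 : ℂ) else 0) l]
    simp
  have filter_lt : {a ∈ Finset.range k | a < l} = Finset.range (min k l) := by
    ext a
    simp
  rw [Finset.sum_congr rfl fun a _ => sum_right a,
    Fin.sum_univ_eq_sum_range (fun a => if a < l then (1 : ℂ) else 0) k, Finset.sum_boole,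
    filter_lt, Finset.card_range]

theorem deflate_inflate (x : Matrix ι ι ℂ) (i j : ι) :
    deflate q (inflate q x) i j =
      ((min (q i) (q j) / (√(q i) * √(q j)) : ℝ) : ℂ) * x i j := by
  have block_sum :
      (∑ a : Fin (q i), ∑ b : Fin (q j),
        if (a : ℕ) = b then inflate q x ⟨i, a⟩ ⟨j, b⟩ else 0) = min (q i) (q j) * x i j := by
    rw [← sum_ite_val_eq_min]
    simp only [Finset.sum_mul, inflate_apply]
    congr! 2 with a _ b
    split_ifs <;> simp
  rw [deflate_apply, block_sum, mul_div_right_comm, Complex.ofReal_div, Complex.ofReal_natCast,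
    Complex.ofReal_mul]

theorem trace_inflate (x : Matrix ι ι ℂ) : (inflate q x).trace = ∑ i, q i * x i i := by
  simp [trace, Fintype.sum_sigma, inflate_apply]

theorem mul_deflate_diag (hq : ∀ i, 0 < q i) (y : Matrix (Σ i, Fin (q i)) (Σ i, Fin (q i)) ℂ)
    (i : ι) : q i * deflate q y i i = ∑ a, y ⟨i, a⟩ ⟨i, a⟩ := by
  have hqi : (q i : ℂ) ≠ 0 := Nat.cast_ne_zero.mpr (hq i).ne'
  have sqrt_mul_sqrt : (√(q i) * √(q i) : ℂ) = q i := by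
    exact_mod_cast Real.mul_self_sqrt (Nat.cast_nonneg (q i))
  rw [deflate_apply, sqrt_mul_sqrt, mul_div_cancel₀ _ hqi]
  simp [← Fin.ext_iff]

theorem isUCPMap_deflate (hq : ∀ i, 0 < q i) : IsUCPMap (deflate q) := by
  refine ⟨?_, (isCPMap_conjMap _).comp (isCPMap_schurMultiplier (posSemidef_levelKernel q))⟩
  ext i j
  by_cases hij : i = j
  · subst hij
    have hqi : (q i : ℂ) ≠ 0 := Nat.cast_ne_zero.mpr (hq i).ne'
    apply mul_left_cancel₀ hqi
    rw [mul_deflate_diag hq]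
    simp
  · rw [deflate_apply]
    simp [one_apply, hij]

end Inflation

theorem sq_one_sub_min_div_le {a b : ℝ} (ha : 0 < a) (hb : 0 < b) :
    (1 - min a b / (√a * √b)) ^ 2 * (a + b) ≤ 2 * (√a - √b) ^ 2 := by
  wlog hab : a ≤ b generalizing a b
  · rw [min_comm, mul_comm √a, add_comm, sub_sq_comm √a]
    exact this hb ha (le_of_not_ge hab)
  have ratio_eq : min a b / (√a * √b) = √a / √b := by
    rw [min_eq_left hab, div_mul_eq_div_div, Real.div_sqrt]
  calc (1 - min a b / (√a * √b)) ^ 2 * (a + b)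
      = (√a - √b) ^ 2 * ((a + b) / b) := by
        rw [ratio_eq, one_sub_div (Real.sqrt_pos.mpr hb).ne', div_pow, Real.sq_sqrt hb.le,
          sub_sq_comm √b, div_mul_eq_mul_div, mul_div_assoc]
    _ ≤ (√a - √b) ^ 2 * 2 := by
        gcongr
        rw [div_le_iff₀ hb]
        linarith
    _ = 2 * (√a - √b) ^ 2 := mul_comm _ _

theorem exists_nat_eq_mul_of_nonneg {ι : Type*} [Finite ι] (d : ι → ℚ) (hd : ∀ i, 0 ≤ d i) :
    ∃ N : ℕ, 0 < N ∧ ∃ q : ι → ℕ, ∀ i, (q i : ℚ) = d i * N := by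
  cases nonempty_fintype ι
  refine ⟨∏ i, (d i).den, Finset.prod_pos fun i _ => (d i).den_pos, ?_⟩
  refine ⟨fun i => (d i).num.toNat * ((∏ j, (d j).den) / (d i).den), fun i => ?_⟩
  have den_dvd : (d i).den ∣ ∏ j, (d j).den :=
    Finset.dvd_prod_of_mem (fun j => (d j).den) (Finset.mem_univ i)
  have num_cast : (((d i).num.toNat : ℕ) : ℚ) = (d i).num := by
    exact_mod_cast Int.toNat_of_nonneg (Rat.num_nonneg.mpr (hd i))
  rw [Nat.cast_mul, num_cast, Nat.cast_div den_dvd (by simp), ← mul_div_assoc, mul_div_right_comm,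
    Rat.num_div_den]

section Density

variable {m : ℕ}

/-- The functional `x ↦ tr_m(x h)` with density `h`. -/
def densityFunctional (h : Matrix (Fin m) (Fin m) ℂ) : Matrix (Fin m) (Fin m) ℂ →ₗ[ℂ] ℂ where
  toFun x := trNorm m (x * h)
  map_add' x y := by simp only [trNorm, Matrix.add_mul, trace_add, add_div]
  map_smul' c x := by simp [trNorm, mul_div_assoc]

theorem densityFunctional_apply (h x : Matrix (Fin m) (Fin m) ℂ) :
    densityFunctional h x = trNorm m (x * h) :=
  rfl

theorem stateSharpNorm_densityFunctional_diagonal (d : Fin m → ℝ)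
    (y : Matrix (Fin m) (Fin m) ℂ) :
    stateSharpNorm (densityFunctional (diagonal fun i => (d i : ℂ))) y =
      √((∑ i, ∑ j, ‖y i j‖ ^ 2 * (d i + d j)) / m / 2) := by
  rw [stateSharpNorm, densityFunctional_apply, trNorm, Matrix.add_mul, trace_add,
    trace_star_mul_self_mul_diagonal, trace_mul_star_self_mul_diagonal, ← Complex.ofReal_add,
    ← Complex.ofReal_natCast, ← Complex.ofReal_div, Complex.ofReal_re]
  simp only [mul_add, Finset.sum_add_distrib, add_comm]

theorem hsNorm_eq_sqrt_sum (y : Matrix (Fin m) (Fin m) ℂ) :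
    hsNorm m y = √((∑ i, ∑ j, ‖y i j‖ ^ 2) / m) := by
  have trace_eq := trace_star_mul_self_mul_diagonal y fun _ => 1
  simp only [Complex.ofReal_one, diagonal_one, mul_one] at trace_eq
  rw [hsNorm, trNorm, trace_eq, ← Complex.ofReal_natCast, ← Complex.ofReal_div, Complex.ofReal_re]

theorem stateSharpNorm_sub_le_hsNorm_commutator {d : Fin m → ℝ} (hd : ∀ i, 0 < d i)
    {x y : Matrix (Fin m) (Fin m) ℂ}
    (hy : ∀ i j, y i j = ((min (d i) (d j) / (√(d i) * √(d j)) : ℝ) : ℂ) * x i j) :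
    stateSharpNorm (densityFunctional (diagonal fun i => (d i : ℂ))) (x - y) ≤
      hsNorm m ((diagonal fun i => (√(d i) : ℂ)) * x - x * diagonal fun i => (√(d i) : ℂ)) := by
  rw [stateSharpNorm_densityFunctional_diagonal, hsNorm_eq_sqrt_sum, div_right_comm]
  gcongr √(?_ / m)
  rw [div_le_iff₀ two_pos]
  simp_rw [Finset.sum_mul]
  refine Finset.sum_le_sum fun i _ => Finset.sum_le_sum fun j _ => ?_
  have sub_entry : (x - y) i j =
      ((1 - min (d i) (d j) / (√(d i) * √(d j)) : ℝ) : ℂ) * x i j := by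
    rw [Matrix.sub_apply, hy, Complex.ofReal_sub, Complex.ofReal_one, sub_mul, one_mul]
  have commutator_entry :
      ((diagonal fun i => (√(d i) : ℂ)) * x - x * diagonal fun i => (√(d i) : ℂ)) i j =
        ((√(d i) - √(d j) : ℝ) : ℂ) * x i j := by
    rw [Matrix.sub_apply, diagonal_mul, mul_diagonal, Complex.ofReal_sub, sub_mul, mul_comm (x i j)]
  rw [sub_entry, commutator_entry, norm_mul, norm_mul, mul_pow, mul_pow, Complex.norm_real,
    Complex.norm_real, Real.norm_eq_abs, Real.norm_eq_abs, sq_abs, sq_abs]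
  linear_combination ‖x i j‖ ^ 2 * sq_one_sub_min_div_le (hd i) (hd j)

end Density

section Factorization

variable {m : ℕ}

/-- The functional `ψ` factors through the normalized trace of some matrix algebra by ucp maps `S`
and `T`, with `T ∘ S` differing from the identity by at most the commutator with `r`. -/
def FactorsThroughTrace (ψ : Matrix (Fin m) (Fin m) ℂ →ₗ[ℂ] ℂ) (r : Matrix (Fin m) (Fin m) ℂ) :
    Prop :=
  ∃ (p : ℕ) (S : Matrix (Fin m) (Fin m) ℂ →ₗ[ℂ] Matrix (Fin p) (Fin p) ℂ)
    (T : Matrix (Fin p) (Fin p) ℂ →ₗ[ℂ] Matrix (Fin m) (Fin m) ℂ),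
    IsUCPMap S ∧ IsUCPMap T ∧ (∀ x, trNorm p (S x) = ψ x) ∧ (∀ y, ψ (T y) = trNorm p y) ∧
      ∀ x, stateSharpNorm ψ (x - T (S x)) ≤ hsNorm m (r * x - x * r)

theorem FactorsThroughTrace.of_fintype {ψ : Matrix (Fin m) (Fin m) ℂ →ₗ[ℂ] ℂ}
    {r : Matrix (Fin m) (Fin m) ℂ} {κ : Type*} [Fintype κ] [DecidableEq κ]
    {S : Matrix (Fin m) (Fin m) ℂ →ₗ[ℂ] Matrix κ κ ℂ}
    {T : Matrix κ κ ℂ →ₗ[ℂ] Matrix (Fin m) (Fin m) ℂ} (hS : IsUCPMap S) (hT : IsUCPMap T)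
    (trace_S : ∀ x, (S x).trace / Fintype.card κ = ψ x)
    (apply_T : ∀ y, ψ (T y) = y.trace / Fintype.card κ)
    (bound : ∀ x, stateSharpNorm ψ (x - T (S x)) ≤ hsNorm m (r * x - x * r)) :
    FactorsThroughTrace ψ r := by
  let e := StarAlgEquiv.ofAlgEquiv (reindexAlgEquiv ℂ ℂ (Fintype.equivFin κ)) fun _ => rfl
  have trNorm_e (y : Matrix κ κ ℂ) :
      trNorm (Fintype.card κ) (e y) = y.trace / Fintype.card κ :=
    congrArg (· / _) ((Fintype.equivFin κ).symm.sum_comp fun a => y a a)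
  refine ⟨Fintype.card κ, e.toAlgEquiv.toLinearMap ∘ₗ S, T ∘ₗ e.symm.toAlgEquiv.toLinearMap,
    (IsUCPMap.of_starAlgEquiv e).comp hS, hT.comp (.of_starAlgEquiv e.symm),
    fun x => (trNorm_e (S x)).trans (trace_S x),
    fun y => (apply_T (e.symm y)).trans (by rw [← trNorm_e, e.apply_symm_apply]), fun x => ?_⟩
  change stateSharpNorm ψ (x - T (e.symm (e (S x)))) ≤ _
  rw [e.symm_apply_apply]
  exact bound x

theorem FactorsThroughTrace.map_starAlgEquiv {h r : Matrix (Fin m) (Fin m) ℂ}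
    (H : FactorsThroughTrace (densityFunctional h) r)
    {α : Matrix (Fin m) (Fin m) ℂ ≃⋆ₐ[ℂ] Matrix (Fin m) (Fin m) ℂ}
    (hα : ∀ x, (α x).trace = x.trace) :
    FactorsThroughTrace (densityFunctional (α h)) (α r) := by
  obtain ⟨p, S, T, hS, hT, trace_S, apply_T, bound⟩ := H
  have density_map (x) : densityFunctional (α h) (α x) = densityFunctional h x := by
    simp only [densityFunctional_apply, trNorm, ← map_mul, hα]
  have sharpNorm_map (x) :
      stateSharpNorm (densityFunctional (α h)) (α x) = stateSharpNorm (densityFunctional h) x := by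
    simp only [stateSharpNorm, ← map_star, ← map_mul, ← map_add, density_map]
  have hsNorm_map (x) : hsNorm m (α x) = hsNorm m x := by
    simp only [hsNorm, trNorm, ← map_star, ← map_mul, hα]
  refine ⟨p, S ∘ₗ α.symm.toAlgEquiv.toLinearMap, α.toAlgEquiv.toLinearMap ∘ₗ T,
    hS.comp (.of_starAlgEquiv α.symm), (IsUCPMap.of_starAlgEquiv α).comp hT,
    fun x => (trace_S (α.symm x)).trans (by rw [← density_map, α.apply_symm_apply]),
    fun y => (density_map (T y)).trans (apply_T y), fun x => ?_⟩
  calc stateSharpNorm (densityFunctional (α h)) (x - α (T (S (α.symm x))))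
      = stateSharpNorm (densityFunctional h) (α.symm x - T (S (α.symm x))) := by
        rw [← sharpNorm_map, map_sub, α.apply_symm_apply]
    _ ≤ hsNorm m (r * α.symm x - α.symm x * r) := bound (α.symm x)
    _ = hsNorm m (α r * x - x * α r) := by
        rw [← hsNorm_map, map_sub, map_mul, map_mul, α.apply_symm_apply]

theorem factorsThroughTrace_diagonal {N : ℕ} {q : Fin m → ℕ} (hN : 0 < N) (hq : ∀ i, 0 < q i)
    (hsum : ∑ i, q i = m * N) :
    FactorsThroughTrace (densityFunctional (diagonal fun i => ((q i / N : ℝ) : ℂ)))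
      (diagonal fun i => (√(q i / N) : ℂ)) := by
  have hN' : (0 : ℝ) < N := Nat.cast_pos.mpr hN
  have card_eq : (Fintype.card (Σ i, Fin (q i)) : ℂ) = m * N := by
    simp only [Fintype.card_sigma, Fintype.card_fin, hsum, Nat.cast_mul]
  have density_apply (x : Matrix (Fin m) (Fin m) ℂ) :
      densityFunctional (diagonal fun i => ((q i / N : ℝ) : ℂ)) x =
        (∑ i, q i * x i i) / (m * N) := by
    simp [densityFunctional_apply, trNorm, trace, ← Finset.sum_div, ← mul_div_assoc, mul_comm,
      div_div]
  refine .of_fintype isUCPMap_inflate (isUCPMap_deflate hq) (fun x => ?_) (fun y => ?_) fun x => ?_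
  · rw [trace_inflate, density_apply, card_eq]
  · rw [density_apply, card_eq]
    simp only [mul_deflate_diag hq, trace, Fintype.sum_sigma, diag_apply]
  · refine stateSharpNorm_sub_le_hsNorm_commutator
      (fun i => div_pos (Nat.cast_pos.mpr (hq i)) hN') fun i j => ?_
    rw [deflate_inflate, Nat.cast_min, min_div_div_right hN'.le, Real.sqrt_div' _ hN'.le,
      Real.sqrt_div' _ hN'.le, div_mul_div_comm, Real.mul_self_sqrt hN'.le,
      div_div_div_cancel_right₀ hN'.ne']

theorem HasPosRatEigenvalues.exists_eq_map_diagonal {h : Matrix (Fin m) (Fin m) ℂ}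
    (hh : HasPosRatEigenvalues h) :
    ∃ (N : ℕ) (q : Fin m → ℕ) (α : Matrix (Fin m) (Fin m) ℂ ≃⋆ₐ[ℂ] Matrix (Fin m) (Fin m) ℂ),
      0 < N ∧ (∀ i, 0 < q i) ∧ (∀ x, (α x).trace = x.trace) ∧
        h = α (diagonal fun i => ((q i / N : ℝ) : ℂ)) := by
  obtain ⟨U, d, hU, hd, rfl⟩ := hh
  obtain ⟨N, hN, q, hq⟩ := exists_nat_eq_mul_of_nonneg d fun i => (hd i).le
  have hq_pos (i) : 0 < q i :=
    Nat.cast_pos.mp (hq i ▸ mul_pos (hd i) (Nat.cast_pos.mpr hN))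
  have cast_d (i) : (d i : ℂ) = ((q i / N : ℝ) : ℂ) := by
    rw [eq_div_of_mul_eq (Nat.cast_ne_zero.mpr hN.ne') (hq i).symm]
    push_cast
    rfl
  refine ⟨N, q, Unitary.conjStarAlgAut ℂ _ (star (⟨U, hU⟩ : unitaryGroup (Fin m) ℂ)), hN, hq_pos,
    trace_conjStarAlgAut _, ?_⟩
  simp [cast_d]

theorem sum_eq_of_densityFunctional_one_eq_one {N : ℕ} {q : Fin m → ℕ} (hN : 0 < N)
    (h_one : densityFunctional (diagonal fun i => ((q i / N : ℝ) : ℂ)) 1 = 1) :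
    ∑ i, q i = m * N := by
  rw [densityFunctional_apply, one_mul, trNorm, trace_diagonal] at h_one
  have sum_div : (∑ i, (q i : ℂ)) / N = m := by
    simpa [Finset.sum_div] using eq_of_div_eq_one h_one
  exact_mod_cast (div_eq_iff (Nat.cast_ne_zero.mpr hN.ne')).mp sum_div

end Factorization

theorem lemma3_2 (m : ℕ) (ψ : Matrix (Fin m) (Fin m) ℂ →ₗ[ℂ] ℂ) (hψstate : IsState ψ)
    (h : Matrix (Fin m) (Fin m) ℂ) (hh : HasPosRatEigenvalues h)
    (hψ : ∀ x : Matrix (Fin m) (Fin m) ℂ, ψ x = trNorm m (x * h))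
    -- `r = h^{1/2}` is the (unique) positive square root of `h`
    (r : Matrix (Fin m) (Fin m) ℂ) (hr : IsPosElem r) (hrr : r * r = h) :
    ∃ (p : ℕ) (S : Matrix (Fin m) (Fin m) ℂ →ₗ[ℂ] Matrix (Fin p) (Fin p) ℂ)
      (T : Matrix (Fin p) (Fin p) ℂ →ₗ[ℂ] Matrix (Fin m) (Fin m) ℂ),
      IsUCPMap S ∧ IsUCPMap T ∧
      (∀ x : Matrix (Fin m) (Fin m) ℂ, trNorm p (S x) = ψ x) ∧
      (∀ y : Matrix (Fin p) (Fin p) ℂ, ψ (T y) = trNorm p y) ∧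
      ∀ x : Matrix (Fin m) (Fin m) ℂ,
        stateSharpNorm ψ (x - T (S x)) ≤ hsNorm m (r * x - x * r) := by
  obtain ⟨N, q, α, hN, hq, hα, rfl⟩ := hh.exists_eq_map_diagonal
  obtain rfl : ψ = densityFunctional (α (diagonal fun i => ((q i / N : ℝ) : ℂ))) :=
    LinearMap.ext hψ
  obtain rfl := hr.eq_map_diagonal_sqrt (fun i => by positivity) hrr
  have sum_q : ∑ i, q i = m * N := by
    apply sum_eq_of_densityFunctional_one_eq_one hN
    simpa [densityFunctional_apply, trNorm, hα] using hψstate.1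
  exact (factorsThroughTrace_diagonal hN hq sum_q).map_starAlgEquiv hα
end
end

section
/- Assume δ > 0 and r ∈ ℕ satisfy δ^{1/2} < 1/(8r). Let M be a von Neumann algebra, H a Hilbert M-bimodule, and ξ, η two almost δ-related unit vectors in H. Then there exist r operators c_1,…,c_r ∈ M with ‖c_j‖ ≤ 1 for 1 ≤ j ≤ r such that ‖(Σ_{j=1}^r c_j*c_j − 1)ξ‖² < 12/r, ‖(Σ_{j=1}^r c_j c_j* − 1)η‖² < 12/r, Σ_{j=1}^r ‖c_j ξ − η c_j‖² < 32δ, and Σ_{j=1}^r ‖c_j* η − ξ c_j*‖² < 32δ. -/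
noncomputable section

/-- A Hilbert bimodule over a concrete von Neumann algebra `M ⊆ B(K)`: a complex Hilbert
space `E` together with a unital `*`-homomorphism `L : M → B(E)` (the left action) and a
unital `*`-antihomomorphism `M → B(E)` (the right action, encoded as a unital
`*`-homomorphism `R` on the opposite algebra `Mᵐᵒᵖ`) with commuting ranges. -/
structure HilbertBimodule {K : Type*} [NormedAddCommGroup K] [InnerProductSpace ℂ K]
    [CompleteSpace K] (M : VonNeumannAlgebra K)
    (E : Type*) [NormedAddCommGroup E] [InnerProductSpace ℂ E] [CompleteSpace E] where
  L : M →⋆ₐ[ℂ] (E →L[ℂ] E)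
  R : (↥M)ᵐᵒᵖ →⋆ₐ[ℂ] (E →L[ℂ] E)
  commutes : ∀ (x y : M) (ξ : E),
    L x (R (MulOpposite.op y) ξ) = R (MulOpposite.op y) (L x ξ)

namespace HilbertBimodule

variable {K : Type*} [NormedAddCommGroup K] [InnerProductSpace ℂ K] [CompleteSpace K]
  {M : VonNeumannAlgebra K} {E : Type*} [NormedAddCommGroup E] [InnerProductSpace ℂ E]
  [CompleteSpace E]

/-- The left action `x ξ`. -/
def lsmul (b : HilbertBimodule M E) (x : M) (ξ : E) : E := b.L x ξ

/-- The right action `ξ x`. -/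
def rsmul (b : HilbertBimodule M E) (ξ : E) (x : M) : E := b.R (MulOpposite.op x) ξ

end HilbertBimodule

/-- Two unit vectors in a Hilbert `M`-bimodule are almost `δ`-related. -/
def HilbertBimodule.AlmostRelatedPair {K : Type*} [NormedAddCommGroup K] [InnerProductSpace ℂ K]
    [CompleteSpace K] {M : VonNeumannAlgebra K}
    {E : Type*} [NormedAddCommGroup E] [InnerProductSpace ℂ E] [CompleteSpace E]
    (b : HilbertBimodule M E) (δ : ℝ) (ξ η : E) : Prop :=
  ∀ ε : ℝ, 0 < ε → ∃ (p : ℕ) (a : Fin p → M),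
    ‖b.lsmul (1 - ∑ j, star (a j) * a j) ξ‖ < ε ∧
    ‖b.lsmul (1 - ∑ j, star (a j) * a j) η‖ < ε ∧
    ‖b.rsmul ξ (1 - ∑ j, star (a j) * a j)‖ < ε ∧
    ‖b.rsmul η (1 - ∑ j, star (a j) * a j)‖ < ε ∧
    ‖b.lsmul (1 - ∑ j, a j * star (a j)) ξ‖ < ε ∧
    ‖b.lsmul (1 - ∑ j, a j * star (a j)) η‖ < ε ∧
    ‖b.rsmul ξ (1 - ∑ j, a j * star (a j))‖ < ε ∧
    ‖b.rsmul η (1 - ∑ j, a j * star (a j))‖ < ε ∧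
    (∑ j, ‖b.lsmul (a j) ξ - b.rsmul η (a j)‖ ^ 2) < δ

/-! Rescaling the `a_j` on both sides by functions of `∑ a_j⋆a_j` and `∑ a_ja_j⋆` makes the row and
the column contractive, at a cost that is small because both sums almost fix `ξ` and `η`. Since the
actions commute, `∑ ‖a_j⋆η - ξa_j⋆‖²` is then controlled along with `∑ ‖a_jξ - ηa_j‖²`.

For random signs the elements `y = r^(-1/2) ∑ ±a_j` have mean Gram operator `r⁻¹ ∑ a_j⋆a_j`, and a
noncommutative Khintchine inequality bounds the mean of `(y⋆y)²` by `3/r²`. Replacing `y` by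
`y(1 + y⋆y/4)⁻¹` gives a contraction, changes `y⋆y` only to second order, and does not increase
`‖yξ - ηy‖² + ‖y⋆η - ξy⋆‖²`. By the variance bound, some `r` samples of this random contraction
satisfy all the estimates at once. -/

open MulOpposite
open scoped InnerProductSpace

section HilbertSpace

variable {E : Type*} [NormedAddCommGroup E] [InnerProductSpace ℂ E] [CompleteSpace E]

lemma sum_norm_sq_apply_apply_le {ι : Type*} [Fintype ι] (X : ι → E →L[ℂ] E) {Q D : E →L[ℂ] E}
    (hQ : ∑ j, star (X j) * X j = Q) (hD : IsSelfAdjoint D) (hQD : Commute Q D) (ξ : E) :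
    ∑ j, ‖X j (D ξ)‖ ^ 2 ≤ ‖Q ξ‖ * ‖D (D ξ)‖ := by
  have hnorm (j : ι) : ‖X j (D ξ)‖ ^ 2 = (⟪(star (X j) * X j) (D ξ), D ξ⟫_ℂ).re := by
    rw [ContinuousLinearMap.apply_norm_sq_eq_inner_adjoint_left]
    rfl
  calc ∑ j, ‖X j (D ξ)‖ ^ 2 = (⟪Q (D ξ), D ξ⟫_ℂ).re := by
        simp only [hnorm, ← hQ, sum_apply, sum_inner, Complex.re_sum]
    _ = (⟪Q ξ, D (D ξ)⟫_ℂ).re := by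
        rw [← mul_apply_eq_comp, hQD.eq, mul_apply_eq_comp]
        exact congrArg Complex.re (hD.isSymmetric (Q ξ) (D ξ))
    _ ≤ ‖Q ξ‖ * ‖D (D ξ)‖ := (Complex.re_le_norm _).trans (norm_inner_le_norm _ _)

end HilbertSpace

section VectorFunctional

variable {A E : Type*} [CStarAlgebra A] [NormedAddCommGroup E] [InnerProductSpace ℂ E]
  [CompleteSpace E] (π : A →⋆ₐ[ℂ] (E →L[ℂ] E)) {ξ : E}

/-- The (unnormalised) vector state `x ↦ Re ⟪ξ, π(x) ξ⟫` of a representation `π`. -/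
def vectorFunctional (ξ : E) : A →ₗ[ℝ] ℝ where
  toFun x := (⟪ξ, π x ξ⟫_ℂ).re
  map_add' x y := by simp
  map_smul' c x := by
    rw [← Complex.coe_smul, map_smul, smul_apply, inner_smul_right]
    simp

lemma vectorFunctional_star_mul_self (x : A) :
    vectorFunctional π ξ (star x * x) = ‖π x ξ‖ ^ 2 := by
  rw [ContinuousLinearMap.apply_norm_sq_eq_inner_adjoint_right,
    ← ContinuousLinearMap.star_eq_adjoint, ← map_star]
  simp [vectorFunctional]

lemma vectorFunctional_one : vectorFunctional π ξ 1 = ‖ξ‖ ^ 2 := by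
  simpa using vectorFunctional_star_mul_self π (ξ := ξ) 1

lemma abs_vectorFunctional_sub_one_le (hξ : ‖ξ‖ = 1) (x : A) :
    |vectorFunctional π ξ x - 1| ≤ ‖π (1 - x) ξ‖ := by
  have hone : vectorFunctional π ξ 1 = 1 := by rw [vectorFunctional_one, hξ, one_pow]
  calc |vectorFunctional π ξ x - 1| = |(⟪ξ, π (1 - x) ξ⟫_ℂ).re| := by
        rw [abs_sub_comm, ← hone, ← map_sub]; rfl
    _ ≤ ‖ξ‖ * ‖π (1 - x) ξ‖ := (Complex.abs_re_le_norm _).trans (norm_inner_le_norm _ _)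
    _ = ‖π (1 - x) ξ‖ := by rw [hξ, one_mul]

variable [PartialOrder A] [StarOrderedRing A]

lemma vectorFunctional_mono : Monotone (vectorFunctional π ξ) := fun x y hxy => by
  have hpos : (π (y - x)).IsPositive :=
    ContinuousLinearMap.nonneg_iff_isPositive _ |>.1 (map_nonneg π (sub_nonneg.2 hxy))
  rw [← sub_nonneg, ← map_sub]
  exact hpos.re_inner_nonneg_right ξ

lemma norm_apply_le_of_star_mul_self_le {x y : A} (hxy : star x * x ≤ star y * y) (ξ : E) :
    ‖π x ξ‖ ≤ ‖π y ξ‖ := by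
  refine le_of_sq_le_sq ?_ (norm_nonneg _)
  simpa only [vectorFunctional_star_mul_self] using vectorFunctional_mono π (ξ := ξ) hxy

lemma norm_apply_le_of_star_mul_self_le_one {x : A} (hx : star x * x ≤ 1) (ξ : E) :
    ‖π x ξ‖ ≤ ‖ξ‖ := by
  simpa using norm_apply_le_of_star_mul_self_le π (y := 1) (by simpa using hx) ξ

lemma norm_sub_sq_le_of_row_le_one {x y : A} (hxy : x * star x + y * star y ≤ 1) (v w : E) :
    ‖π x v - π y w‖ ^ 2 ≤ ‖v‖ ^ 2 + ‖w‖ ^ 2 := by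
  set z := π x v - π y w
  have hcol : ‖π (star x) z‖ ^ 2 + ‖π (star y) z‖ ^ 2 ≤ ‖z‖ ^ 2 := by
    rw [← vectorFunctional_star_mul_self, ← vectorFunctional_star_mul_self, ← map_add, star_star,
      star_star, ← vectorFunctional_one π]
    exact vectorFunctional_mono π hxy
  have hpair : (⟪v, π (star x) z⟫_ℂ).re - (⟪w, π (star y) z⟫_ℂ).re = ‖z‖ ^ 2 := by
    rw [map_star, map_star, ContinuousLinearMap.star_eq_adjoint,
      ContinuousLinearMap.star_eq_adjoint, ContinuousLinearMap.adjoint_inner_right,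
      ContinuousLinearMap.adjoint_inner_right, ← Complex.sub_re, ← inner_sub_left]
    exact inner_self_eq_norm_sq (𝕜 := ℂ) z
  have hx := norm_sub_sq (𝕜 := ℂ) v (π (star x) z)
  have hy := norm_add_sq (𝕜 := ℂ) w (π (star y) z)
  simp only [RCLike.re_to_complex] at hx hy
  nlinarith [sq_nonneg ‖v - π (star x) z‖, sq_nonneg ‖w + π (star y) z‖]

lemma norm_apply_sq_add_norm_apply_sq_le {x y : A} (hxy : star x * x + star y * y ≤ 1) (v : E) :
    ‖π x v‖ ^ 2 + ‖π y v‖ ^ 2 ≤ ‖v‖ ^ 2 := by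
  rw [← vectorFunctional_star_mul_self, ← vectorFunctional_star_mul_self, ← map_add,
    ← vectorFunctional_one π]
  exact vectorFunctional_mono π hxy

lemma sq_le_self_of_nonneg_of_le_one {z : A} (hz₀ : 0 ≤ z) (hz₁ : z ≤ 1) : z * z ≤ z := by
  simpa [pow_two] using CStarAlgebra.pow_antitone hz₀ hz₁ one_le_two

lemma norm_apply_sub_sq_le {z : A} (hz₀ : 0 ≤ z) (hz₁ : z ≤ 1) (ξ : E) :
    ‖π z ξ - ξ‖ ^ 2 ≤ ‖ξ‖ ^ 2 - vectorFunctional π ξ z := by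
  have hsq : (1 - z) * (1 - z) ≤ 1 - z :=
    sq_le_self_of_nonneg_of_le_one (sub_nonneg.2 hz₁) (sub_le_self _ hz₀)
  have hstar : star (1 - z) = 1 - z := (IsSelfAdjoint.of_nonneg (sub_nonneg.2 hz₁)).star_eq
  calc ‖π z ξ - ξ‖ ^ 2 = ‖π (1 - z) ξ‖ ^ 2 := by rw [norm_sub_rev]; simp
    _ ≤ vectorFunctional π ξ (1 - z) := by
        rw [← vectorFunctional_star_mul_self, hstar]
        exact vectorFunctional_mono π hsq
    _ = ‖ξ‖ ^ 2 - vectorFunctional π ξ z := by rw [map_sub, vectorFunctional_one]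

end VectorFunctional

section Clip

variable {A : Type*} [CStarAlgebra A]

/-- The multiplier `max(1, x)⁻¹`, which cuts a positive element `x` down to a contraction while
leaving the spectral part where `x ≤ 1` unchanged. -/
def clip (x : A) : A := cfc (fun t : ℝ => (max 1 t)⁻¹) x

lemma continuousOn_inv_max_one (s : Set ℝ) : ContinuousOn (fun t : ℝ => (max 1 t)⁻¹) s :=
  ContinuousOn.inv₀ (by fun_prop) fun _ _ => (lt_max_of_lt_left one_pos).ne'

lemma isSelfAdjoint_clip (x : A) : IsSelfAdjoint (clip x) := cfc_predicate _ x

lemma commute_clip {x : A} (hx : IsSelfAdjoint x) : Commute x (clip x) := by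
  simpa only [clip, cfc_id' ℝ x] using cfc_commute_cfc (fun t : ℝ => t) (fun t => (max 1 t)⁻¹) x

variable [PartialOrder A] [StarOrderedRing A]

lemma clip_mul_clip_le_one (x : A) : clip x * clip x ≤ 1 := by
  have hcont := continuousOn_inv_max_one (spectrum ℝ x)
  rw [clip, ← cfc_mul _ _ x hcont hcont]
  refine cfc_le_one _ x fun t _ => ?_
  have h : (max 1 t)⁻¹ ≤ 1 := inv_le_one_of_one_le₀ (le_max_left 1 t)
  exact mul_le_one₀ h (by positivity) h

lemma clip_mul_self_mul_clip_le_one {x : A} (hx : IsSelfAdjoint x) :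
    clip x * x * clip x ≤ 1 := by
  have hcont := continuousOn_inv_max_one (spectrum ℝ x)
  have hcfc : clip x * x * clip x = cfc (fun t : ℝ => (max 1 t)⁻¹ * t * (max 1 t)⁻¹) x := by
    rw [cfc_mul _ _ x (by fun_prop) (by fun_prop), cfc_mul _ _ x (by fun_prop) (by fun_prop),
      cfc_id' ℝ x, clip]
  rw [hcfc]
  refine cfc_le_one _ x fun t _ => ?_
  have hpos : 0 < max 1 t := lt_max_of_lt_left one_pos
  calc (max 1 t)⁻¹ * t * (max 1 t)⁻¹ ≤ (max 1 t)⁻¹ * max 1 t * (max 1 t)⁻¹ := by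
        gcongr; exact le_max_right 1 t
    _ = (max 1 t)⁻¹ := by rw [inv_mul_cancel₀ hpos.ne', one_mul]
    _ ≤ 1 := inv_le_one_of_one_le₀ (le_max_left 1 t)

lemma one_sub_inv_max_one_pow_four_le (t : ℝ) : (1 - (max 1 t)⁻¹) ^ 4 ≤ (1 - t) ^ 2 := by
  rcases le_total t 1 with ht | ht
  · simpa [max_eq_left ht] using sq_nonneg (1 - t)
  · rw [max_eq_right ht]
    have hinv : t⁻¹ ≤ 1 := inv_le_one_of_one_le₀ ht
    have hinv₀ : 0 ≤ t⁻¹ := by positivity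
    have hle : 1 - t⁻¹ ≤ t - 1 := by
      have : t * t⁻¹ = 1 := mul_inv_cancel₀ (by positivity)
      nlinarith
    calc (1 - t⁻¹) ^ 4 ≤ (1 - t⁻¹) ^ 2 :=
          pow_le_pow_of_le_one (sub_nonneg.2 hinv) (by linarith) (by norm_num)
      _ ≤ (t - 1) ^ 2 := pow_le_pow_left₀ (sub_nonneg.2 hinv) hle 2
      _ = (1 - t) ^ 2 := by ring

lemma one_sub_clip_pow_four_le {x : A} (hx : IsSelfAdjoint x) :
    (1 - clip x) ^ 4 ≤ (1 - x) ^ 2 := by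
  have hcont := continuousOn_inv_max_one (spectrum ℝ x)
  have hclip : 1 - clip x = cfc (fun t : ℝ => 1 - (max 1 t)⁻¹) x := by
    rw [cfc_sub (fun _ => (1 : ℝ)) _ x, cfc_const_one ℝ x, clip]
  have hid : 1 - x = cfc (fun t : ℝ => 1 - t) x := by
    rw [cfc_sub (fun _ => (1 : ℝ)) _ x, cfc_const_one ℝ x, cfc_id' ℝ x]
  rw [hclip, hid, ← cfc_pow _ 4 x, ← cfc_pow _ 2 x]
  exact cfc_mono (fun t _ => one_sub_inv_max_one_pow_four_le t) (by fun_prop) (by fun_prop)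

end Clip

section SoftTruncation

variable {A : Type*} [CStarAlgebra A]

/-- The resolvent `(1 + x⋆x)⁻¹`. -/
def gramResolvent (x : A) : A := cfc (fun t : ℝ => (1 + t)⁻¹) (star x * x)

/-- The truncation `x (1 + x⋆x)⁻¹`. It is bounded by `1/2` for every `x`, and agrees with `x` to
first order near `0`. -/
def softTrunc (x : A) : A := x * gramResolvent x

lemma continuousOn_inv_one_add_spectrum (x : A) :
    ContinuousOn (fun t : ℝ => (1 + t)⁻¹) (spectrum ℝ (star x * x)) := by
  refine ContinuousOn.inv₀ (by fun_prop) fun t ht => ?_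
  have := spectrum_star_mul_self_nonneg t ht
  positivity

lemma isSelfAdjoint_gramResolvent (x : A) : IsSelfAdjoint (gramResolvent x) := cfc_predicate _ _

lemma gramResolvent_mul_one_add (x : A) : gramResolvent x * (1 + star x * x) = 1 := by
  have hcont := continuousOn_inv_one_add_spectrum x
  have hu : (1 : A) + star x * x = cfc (fun t : ℝ => 1 + t) (star x * x) := by
    rw [cfc_const_add 1 (fun t : ℝ => t) (star x * x), cfc_id' ℝ (star x * x), map_one]
  rw [hu, gramResolvent, ← cfc_mul _ _ _ hcont, ← cfc_const_one ℝ (star x * x)]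
  refine cfc_congr fun t ht => ?_
  have := spectrum_star_mul_self_nonneg t ht
  exact inv_mul_cancel₀ (by positivity)

lemma one_add_mul_gramResolvent (x : A) : (1 + star x * x) * gramResolvent x = 1 := by
  have hsa : IsSelfAdjoint (1 + star x * x) := (IsSelfAdjoint.one A).add (.star_mul_self x)
  simpa only [star_mul, star_one, hsa.star_eq, (isSelfAdjoint_gramResolvent x).star_eq] using
    congrArg star (gramResolvent_mul_one_add x)

lemma softTrunc_eq_gramResolvent_star_mul (x : A) :
    softTrunc x = gramResolvent (star x) * x := by
  have hinv := gramResolvent_mul_one_add (star x)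
  rw [star_star] at hinv
  calc softTrunc x = gramResolvent (star x) * (1 + x * star x) * (x * gramResolvent x) := by
        rw [hinv, one_mul, softTrunc]
    _ = gramResolvent (star x) * x * ((1 + star x * x) * gramResolvent x) := by noncomm_ring
    _ = gramResolvent (star x) * x := by rw [one_add_mul_gramResolvent, mul_one]

lemma star_softTrunc (x : A) : star (softTrunc x) = softTrunc (star x) := by
  rw [softTrunc_eq_gramResolvent_star_mul, star_mul, (isSelfAdjoint_gramResolvent _).star_eq,
    softTrunc]

lemma gramResolvent_add_star_mul_softTrunc (x : A) :
    gramResolvent x + star x * softTrunc x = 1 := by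
  rw [softTrunc, ← one_add_mul_gramResolvent x, add_mul, one_mul, mul_assoc]

lemma gramResolvent_sq_add_softTrunc (x : A) :
    gramResolvent x * gramResolvent x + star (softTrunc x) * softTrunc x = gramResolvent x := by
  calc _ = gramResolvent x * ((1 + star x * x) * gramResolvent x) := by
        rw [softTrunc, star_mul, (isSelfAdjoint_gramResolvent x).star_eq]
        noncomm_ring
    _ = gramResolvent x := by rw [one_add_mul_gramResolvent, mul_one]

lemma star_softTrunc_mul_softTrunc (x : A) :
    star (softTrunc x) * softTrunc x = cfc (fun t : ℝ => t * (1 + t)⁻¹ ^ 2) (star x * x) := by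
  have hcont := continuousOn_inv_one_add_spectrum x
  have hcomm : gramResolvent x * (star x * x) = star x * x * gramResolvent x := by
    simpa only [mul_add, add_mul, mul_one, one_mul, add_right_inj] using
      (gramResolvent_mul_one_add x).trans (one_add_mul_gramResolvent x).symm
  calc star (softTrunc x) * softTrunc x = gramResolvent x * (star x * x) * gramResolvent x := by
        rw [softTrunc, star_mul, (isSelfAdjoint_gramResolvent x).star_eq]
        noncomm_ring
    _ = star x * x * gramResolvent x ^ 2 := by rw [hcomm, pow_two, mul_assoc]
    _ = cfc (fun t : ℝ => t * (1 + t)⁻¹ ^ 2) (star x * x) := by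
        rw [cfc_mul _ _ _, cfc_pow _ 2 _, cfc_id' ℝ (star x * x), gramResolvent]

lemma norm_mul_inv_one_add_sq_le {t : ℝ} (ht : 0 ≤ t) : ‖t * (1 + t)⁻¹ ^ 2‖ ≤ (1 / 2) ^ 2 := by
  rw [Real.norm_of_nonneg (by positivity)]
  field_simp
  nlinarith [sq_nonneg (1 - t)]

lemma norm_softTrunc_le (x : A) : ‖softTrunc x‖ ≤ 1 / 2 := by
  refine le_of_sq_le_sq ?_ (by norm_num)
  rw [pow_two, ← CStarRing.norm_star_mul_self, star_softTrunc_mul_softTrunc]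
  exact norm_cfc_le (by norm_num) fun t ht =>
    norm_mul_inv_one_add_sq_le (spectrum_star_mul_self_nonneg t ht)

variable [PartialOrder A] [StarOrderedRing A]

lemma gramResolvent_le_one (x : A) : gramResolvent x ≤ 1 :=
  cfc_le_one _ _ fun t ht => by
    have := spectrum_star_mul_self_nonneg t ht
    exact inv_le_one_of_one_le₀ (by linarith)

lemma mul_inv_one_add_sq_le_self {t : ℝ} (ht : 0 ≤ t) : t * (1 + t)⁻¹ ^ 2 ≤ t := by
  have h : (1 + t)⁻¹ ≤ 1 := inv_le_one_of_one_le₀ (by linarith)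
  exact mul_le_of_le_one_right ht (pow_le_one₀ (by positivity) h)

lemma sub_two_mul_sq_le_mul_inv_one_add_sq {t : ℝ} (ht : 0 ≤ t) :
    t - 2 * t ^ 2 ≤ t * (1 + t)⁻¹ ^ 2 := by
  field_simp
  nlinarith [mul_nonneg ht ht]

lemma star_softTrunc_mul_softTrunc_le (x : A) :
    star (softTrunc x) * softTrunc x ≤ star x * x := by
  have hcont := continuousOn_inv_one_add_spectrum x
  rw [star_softTrunc_mul_softTrunc]
  conv_rhs => rw [← cfc_id' ℝ (star x * x)]
  exact cfc_mono fun t ht =>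
    mul_inv_one_add_sq_le_self (spectrum_star_mul_self_nonneg t ht)

lemma sq_star_softTrunc_mul_softTrunc_le (x : A) :
    (star (softTrunc x) * softTrunc x) ^ 2 ≤ (star x * x) ^ 2 := by
  have hcont := continuousOn_inv_one_add_spectrum x
  rw [star_softTrunc_mul_softTrunc, ← cfc_pow _ 2 _ (by fun_prop)]
  conv_rhs => rw [← cfc_pow_id (R := ℝ) (star x * x) 2]
  refine cfc_mono fun t ht => ?_
  have ht₀ := spectrum_star_mul_self_nonneg t ht
  exact pow_le_pow_left₀ (by positivity) (mul_inv_one_add_sq_le_self ht₀) 2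

lemma sub_two_smul_sq_le_star_softTrunc_mul_softTrunc (x : A) :
    star x * x - (2 : ℝ) • (star x * x) ^ 2 ≤ star (softTrunc x) * softTrunc x := by
  have hcont := continuousOn_inv_one_add_spectrum x
  have hcfc : star x * x - (2 : ℝ) • (star x * x) ^ 2 =
      cfc (fun t : ℝ => t - 2 * t ^ 2) (star x * x) := by
    rw [cfc_sub _ _ _, cfc_const_mul _ _ _, cfc_pow_id (star x * x), cfc_id' ℝ (star x * x)]
  rw [star_softTrunc_mul_softTrunc, hcfc]
  exact cfc_mono fun t ht =>
    sub_two_mul_sq_le_mul_inv_one_add_sq (spectrum_star_mul_self_nonneg t ht)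

end SoftTruncation

section RandomSigns

/-- The sum `∑ ± v_j` with the signs prescribed by `ε`. -/
def signedSum {G : Type*} [AddCommGroup G] {p : ℕ} (v : Fin p → G) (ε : Fin p → ℤˣ) : G :=
  ∑ j, ε j • v j

lemma map_signedSum {G G' F : Type*} [AddCommGroup G] [AddCommGroup G'] [FunLike F G G']
    [AddMonoidHomClass F G G'] (f : F) {p : ℕ} (v : Fin p → G) (ε : Fin p → ℤˣ) :
    f (signedSum v ε) = signedSum (fun j => f (v j)) ε := by
  simp [signedSum, Units.smul_def]

lemma sum_signedSum_succ {G N : Type*} [AddCommGroup G] [AddCommMonoid N] {p : ℕ}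
    (v : Fin (p + 1) → G) (f : G → N) :
    ∑ ε, f (signedSum v ε) =
      ∑ ε, (f (signedSum (fun j => v j.succ) ε + v 0) +
        f (signedSum (fun j => v j.succ) ε - v 0)) := by
  rw [← (Fin.consEquiv fun _ => ℤˣ).sum_comp, Fintype.sum_prod_type, UnitsInt.univ,
    Finset.sum_pair (by decide), Finset.sum_add_distrib]
  simp [signedSum, Fin.consEquiv, Fin.sum_univ_succ, add_comm, sub_eq_add_neg]

lemma sum_signs_of_parallelogram {G N : Type*} [AddCommGroup G] [AddCommGroup N] [Module ℝ N]
    {q : G → N} (hq : ∀ x y, q (x + y) + q (x - y) = (2 : ℝ) • (q x + q y)) {p : ℕ}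
    (v : Fin p → G) : ∑ ε, q (signedSum v ε) = (2 : ℝ) ^ p • ∑ j, q (v j) := by
  induction p with
  | zero =>
    have hq₀ : q 0 = 0 := by
      have h : (2 : ℝ) • q 0 = 0 := by
        have := hq 0 0
        rw [add_zero, sub_zero, ← two_smul ℝ, ← sub_eq_zero] at this
        rw [← neg_eq_zero, ← this]
        module
      exact (smul_eq_zero_iff_right two_ne_zero).1 h
    simp [signedSum, hq₀]
  | succ p ih =>
    simp only [sum_signedSum_succ, hq, ← Finset.smul_sum, Finset.sum_add_distrib, ih,
      Finset.sum_const, Finset.card_univ, Fin.sum_univ_succ]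
    simp only [Fintype.card_pi, Finset.prod_const, Finset.card_univ, Fintype.card_fin,
      Fintype.card_units_int, ← Nat.cast_smul_eq_nsmul ℝ]
    push_cast
    module

lemma sum_signs_norm_sq {E : Type*} [NormedAddCommGroup E] [InnerProductSpace ℝ E] {p : ℕ}
    (v : Fin p → E) : ∑ ε, ‖signedSum v ε‖ ^ 2 = 2 ^ p * ∑ j, ‖v j‖ ^ 2 :=
  sum_signs_of_parallelogram (q := fun x : E => ‖x‖ ^ 2)
    (fun x y => by simpa only [pow_two, smul_eq_mul] using parallelogram_law_with_norm ℝ x y) v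

section StarAlgebra

variable {A : Type*} [Ring A] [StarRing A]

lemma star_signedSum {p : ℕ} (a : Fin p → A) (ε : Fin p → ℤˣ) :
    star (signedSum a ε) = signedSum (star a) ε :=
  map_signedSum starAddEquiv a ε

/-- The Gram operator `∑ a_j⋆ a_j` of a finite family, i.e. `T⋆T` for the column operator `T` with
entries `a_j`. -/
def columnGram {ι : Type*} [Fintype ι] (a : ι → A) : A := ∑ j, star (a j) * a j

lemma columnGram_star {ι : Type*} [Fintype ι] (a : ι → A) :
    columnGram (star a) = ∑ j, a j * star (a j) := by
  simp [columnGram]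

lemma isSelfAdjoint_columnGram {ι : Type*} [Fintype ι] (a : ι → A) :
    IsSelfAdjoint (columnGram a) := by
  simp [IsSelfAdjoint, columnGram]

variable [Module ℝ A]

lemma sum_signs_conjugate {p : ℕ} (a : Fin p → A) (x : A) :
    ∑ ε, star (signedSum a ε) * x * signedSum a ε =
      (2 : ℝ) ^ p • ∑ j, star (a j) * x * a j :=
  sum_signs_of_parallelogram (q := fun y => star y * x * y)
    (fun y z => by simp only [star_add, star_sub, two_smul]; noncomm_ring) a

lemma sum_signs_star_mul_self {p : ℕ} (a : Fin p → A) :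
    ∑ ε, star (signedSum a ε) * signedSum a ε = (2 : ℝ) ^ p • columnGram a := by
  simpa only [mul_one, columnGram] using sum_signs_conjugate a 1

lemma sum_signs_mul_star_self {p : ℕ} (a : Fin p → A) :
    ∑ ε, signedSum a ε * star (signedSum a ε) = (2 : ℝ) ^ p • columnGram (star a) := by
  simp [← sum_signs_star_mul_self, ← star_signedSum]

end StarAlgebra

variable {A : Type*} [CStarAlgebra A] [PartialOrder A] [StarOrderedRing A]

lemma columnGram_nonneg {ι : Type*} [Fintype ι] (a : ι → A) : 0 ≤ columnGram a :=
  Finset.sum_nonneg fun _ _ => star_mul_self_nonneg _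

/-- The cross terms on the left add up to the right-hand side minus
`2 (x⋆y - y⋆x)⋆ (x⋆y - y⋆x)`. -/
lemma sq_gram_add_add_sq_gram_sub_le (x y : A) :
    (star (x + y) * (x + y)) ^ 2 + (star (x - y) * (x - y)) ^ 2 ≤
      (2 : ℝ) • ((star x * x) ^ 2 + star x * x * (star y * y) + star y * y * (star x * x) +
        (star y * y) ^ 2 + (2 : ℝ) • (star x * (y * star y) * x + star y * (x * star x) * y)) := by
  have hnonneg : 0 ≤ (2 : ℝ) • (star (star x * y - star y * x) * (star x * y - star y * x)) :=
    smul_nonneg zero_le_two (star_mul_self_nonneg _)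
  rw [← sub_nonneg]
  refine hnonneg.trans_eq ?_
  simp only [star_add, star_sub, star_mul, star_star, two_smul]
  noncomm_ring

lemma sum_signs_sq_gram_succ_le {p : ℕ} (a : Fin p → A) (y : A) :
    ∑ ε, ((star (signedSum a ε + y) * (signedSum a ε + y)) ^ 2 +
        (star (signedSum a ε - y) * (signedSum a ε - y)) ^ 2) ≤
      (2 : ℝ) • (∑ ε, (star (signedSum a ε) * signedSum a ε) ^ 2 +
        (2 : ℝ) ^ p • (columnGram a * (star y * y) + star y * y * columnGram a +
          (star y * y) ^ 2 + (2 : ℝ) • (∑ j, star (a j) * (y * star y) * a j +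
            star y * columnGram (star a) * y))) := by
  refine (Finset.sum_le_sum fun ε _ => sq_gram_add_add_sq_gram_sub_le _ _).trans_eq ?_
  simp only [← Finset.smul_sum, Finset.sum_add_distrib, ← Finset.sum_mul, ← Finset.mul_sum,
    sum_signs_conjugate, sum_signs_star_mul_self, sum_signs_mul_star_self, smul_mul_assoc,
    mul_smul_comm, Finset.sum_const, Finset.card_univ, Fintype.card_pi, Finset.prod_const,
    Fintype.card_fin, Fintype.card_units_int, ← Nat.cast_smul_eq_nsmul ℝ]
  push_cast
  module

/-- The noncommutative Khintchine inequality in `L⁴`. -/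
lemma sum_signs_sq_gram_le {p : ℕ} (a : Fin p → A) :
    ∑ ε, (star (signedSum a ε) * signedSum a ε) ^ 2 ≤
      (2 : ℝ) ^ p • (columnGram a ^ 2 +
        (2 : ℝ) • ∑ j, star (a j) * columnGram (star a) * a j) := by
  induction p with
  | zero => simp [signedSum, columnGram]
  | succ p ih =>
    set a' : Fin p → A := fun j => a j.succ with ha'
    set y := a 0 with hy
    have hS : columnGram a = star y * y + columnGram a' := Fin.sum_univ_succ _
    have hT : columnGram (star a) = y * star y + columnGram (star a') := by
      simp [columnGram_star, Fin.sum_univ_succ, hy, ha']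
    have hsplit : ∑ j, star (a j) * columnGram (star a) * a j =
        star y * columnGram (star a) * y + ∑ j, star (a' j) * columnGram (star a) * a' j :=
      Fin.sum_univ_succ _
    have hextra : 0 ≤ (2 : ℝ) ^ (p + 2) • (star y * y) ^ 2 :=
      smul_nonneg (by positivity) (IsSelfAdjoint.star_mul_self y).sq_nonneg
    rw [sum_signedSum_succ a fun x => (star x * x) ^ 2]
    refine (sum_signs_sq_gram_succ_le a' y).trans ((smul_le_smul_of_nonneg_left
      (add_le_add_left (ih a') _) zero_le_two).trans
        ((le_add_of_nonneg_right hextra).trans_eq ?_))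
    rw [hsplit, hS, hT]
    simp only [mul_add, add_mul, Finset.sum_add_distrib, pow_succ, pow_zero, one_mul, mul_assoc]
    module

lemma sum_signs_sq_gram_le_smul_one {p : ℕ} {a : Fin p → A} (hS : columnGram a ≤ 1)
    (hT : columnGram (star a) ≤ 1) :
    ∑ ε, (star (signedSum a ε) * signedSum a ε) ^ 2 ≤ (2 ^ p * 3 : ℝ) • 1 := by
  have hsq : columnGram a ^ 2 ≤ 1 := by
    simpa only [pow_zero] using CStarAlgebra.pow_antitone (columnGram_nonneg a) hS zero_le_two
  have hcross : ∑ j, star (a j) * columnGram (star a) * a j ≤ 1 := by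
    refine le_trans (Finset.sum_le_sum fun j _ => star_left_conjugate_le_conjugate hT (a j)) ?_
    simpa only [mul_one, columnGram] using hS
  refine (sum_signs_sq_gram_le a).trans ?_
  rw [mul_smul]
  refine smul_le_smul_of_nonneg_left ?_ (by positivity)
  calc _ ≤ (1 : A) + (2 : ℝ) • 1 := add_le_add hsq (smul_le_smul_of_nonneg_left hcross zero_le_two)
    _ = (3 : ℝ) • 1 := by module

end RandomSigns

section Sampling

variable {H Ω : Type*} [NormedAddCommGroup H] [InnerProductSpace ℝ H] [Fintype Ω]

lemma sum_norm_sub_mean_sq_le {X : Ω → H} {μ : H} (hμ : ∑ i, X i = Fintype.card Ω • μ) :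
    ∑ i, ‖X i - μ‖ ^ 2 ≤ ∑ i, ‖X i‖ ^ 2 := by
  have hcross : ∑ i, ⟪X i, μ⟫_ℝ = Fintype.card Ω * ‖μ‖ ^ 2 := by
    rw [← sum_inner, hμ, ← Nat.cast_smul_eq_nsmul ℝ, real_inner_smul_left,
      real_inner_self_eq_norm_sq]
  have hsum : ∑ i, ‖X i - μ‖ ^ 2 = ∑ i, ‖X i‖ ^ 2 - Fintype.card Ω * ‖μ‖ ^ 2 := by
    simp only [norm_sub_sq_real, Finset.sum_add_distrib, Finset.sum_sub_distrib,
      ← Finset.mul_sum, hcross, Finset.sum_const, Finset.card_univ, nsmul_eq_mul]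
    ring
  rw [hsum]
  exact sub_le_self _ (by positivity)

lemma exists_norm_add_sq_add_le [Nonempty Ω] {Y : Ω → H} (hY : ∑ i, Y i = 0) {g : Ω → ℝ} {V : ℝ}
    (hV : ∑ i, (‖Y i‖ ^ 2 + g i) ≤ Fintype.card Ω * V) (v : H) :
    ∃ i, ‖v + Y i‖ ^ 2 + g i ≤ ‖v‖ ^ 2 + V := by
  have hcross : ∑ i, ⟪v, Y i⟫_ℝ = 0 := by rw [← inner_sum, hY, inner_zero_right]
  have hsum : ∑ i, (‖v + Y i‖ ^ 2 + g i) ≤ ∑ _i : Ω, (‖v‖ ^ 2 + V) := by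
    simp only [norm_add_sq_real, Finset.sum_add_distrib, ← Finset.mul_sum, hcross,
      Finset.sum_const, Finset.card_univ, nsmul_eq_mul] at hV ⊢
    linarith
  obtain ⟨i, -, hi⟩ := Finset.exists_le_of_sum_le Finset.univ_nonempty hsum
  exact ⟨i, hi⟩

lemma exists_norm_add_sum_sq_add_sum_le [Nonempty Ω] {Y : Ω → H} (hY : ∑ i, Y i = 0) {g : Ω → ℝ}
    {V : ℝ} (hV : ∑ i, (‖Y i‖ ^ 2 + g i) ≤ Fintype.card Ω * V) (v : H) (r : ℕ) :
    ∃ ω : Fin r → Ω, ‖v + ∑ l, Y (ω l)‖ ^ 2 + ∑ l, g (ω l) ≤ ‖v‖ ^ 2 + r * V := by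
  induction r with
  | zero => exact ⟨Fin.elim0, by simp⟩
  | succ r ih =>
    obtain ⟨ω, hω⟩ := ih
    obtain ⟨i, hi⟩ := exists_norm_add_sq_add_le hY hV (v + ∑ l, Y (ω l))
    refine ⟨Fin.snoc ω i, ?_⟩
    simp only [Fin.sum_univ_castSucc, Fin.snoc_castSucc, Fin.snoc_last, ← add_assoc]
    push_cast
    linarith

/-- The derandomised law of large numbers: some `r` samples of `X` do at least as well as `r`
independent ones do on average. -/
lemma exists_samples [Nonempty Ω] {X : Ω → H} {μ : H} (hμ : ∑ i, X i = Fintype.card Ω • μ)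
    {g : Ω → ℝ} {V : ℝ} (hV : ∑ i, (‖X i‖ ^ 2 + g i) ≤ Fintype.card Ω * V) (x₀ : H) (r : ℕ) :
    ∃ ω : Fin r → Ω, ‖∑ l, X (ω l) - x₀‖ ^ 2 + ∑ l, g (ω l) ≤ ‖r • μ - x₀‖ ^ 2 + r * V := by
  have hcentred : ∑ i, (X i - μ) = 0 := by
    rw [Finset.sum_sub_distrib, hμ, Finset.sum_const, Finset.card_univ, sub_self]
  have hvar : ∑ i, (‖X i - μ‖ ^ 2 + g i) ≤ Fintype.card Ω * V := by
    rw [Finset.sum_add_distrib] at hV ⊢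
    exact (add_le_add_left (sum_norm_sub_mean_sq_le hμ) _).trans hV
  obtain ⟨ω, hω⟩ := exists_norm_add_sum_sq_add_sum_le hcentred hvar (r • μ - x₀) r
  refine ⟨ω, ?_⟩
  have hsum : r • μ - x₀ + ∑ l, (X (ω l) - μ) = ∑ l, X (ω l) - x₀ := by
    rw [Finset.sum_sub_distrib, Finset.sum_const, Finset.card_univ, Fintype.card_fin]
    abel
  rwa [hsum] at hω

end Sampling

/-- A Hilbert bimodule over a C⋆-algebra `A`: commuting representations `L` of `A` and `R` of the
opposite algebra on one Hilbert space, so that `R (op x)` is right multiplication by `x`. -/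
structure CStarBimodule (A E : Type*) [CStarAlgebra A] [NormedAddCommGroup E]
    [InnerProductSpace ℂ E] [CompleteSpace E] where
  L : A →⋆ₐ[ℂ] (E →L[ℂ] E)
  R : Aᵐᵒᵖ →⋆ₐ[ℂ] (E →L[ℂ] E)
  commute : ∀ x y, Commute (L x) (R y)

namespace CStarBimodule

section Defect

variable {A E : Type*} [CStarAlgebra A] [NormedAddCommGroup E] [InnerProductSpace ℂ E]
  [CompleteSpace E] (B : CStarBimodule A E) (ξ η : E)

lemma L_apply_R_apply (x : A) (y : Aᵐᵒᵖ) (v : E) : B.L x (B.R y v) = B.R y (B.L x v) :=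
  congrArg (· v) (B.commute x y).eq

/-- The failure `xξ - ηx` of `x` to intertwine `ξ` and `η`. -/
def defect (ξ η : E) : A →ₗ[ℂ] E where
  toFun x := B.L x ξ - B.R (op x) η
  map_add' x y := by simp only [map_add, op_add, add_apply]; abel
  map_smul' c x := by simp [smul_sub]

lemma defect_apply (x : A) : B.defect ξ η x = B.L x ξ - B.R (op x) η := rfl

/-- The total defect of `x` and `x⋆`, which is invariant under `(x, ξ, η) ↦ (x⋆, η, ξ)`. -/
def defectEnergy (ξ η : E) (x : A) : ℝ :=
  ‖B.defect ξ η x‖ ^ 2 + ‖B.defect η ξ (star x)‖ ^ 2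

lemma defectEnergy_smul (c : ℝ) (x : A) :
    B.defectEnergy ξ η (c • x) = c ^ 2 * B.defectEnergy ξ η x := by
  have hsmul (ζ ζ' : E) (y : A) : ‖B.defect ζ ζ' (c • y)‖ ^ 2 = c ^ 2 * ‖B.defect ζ ζ' y‖ ^ 2 := by
    rw [← Complex.coe_smul, map_smul, norm_smul, Complex.norm_real, mul_pow, Real.norm_eq_abs,
      sq_abs]
  rw [defectEnergy, star_smul, star_trivial, hsmul, hsmul, defectEnergy, mul_add]

lemma sum_signs_defectEnergy {p : ℕ} (a : Fin p → A) :
    ∑ ε, B.defectEnergy ξ η (signedSum a ε) = 2 ^ p * ∑ j, B.defectEnergy ξ η (a j) := by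
  let _ : InnerProductSpace ℝ E := .complexToReal
  simp only [defectEnergy, Finset.sum_add_distrib, star_signedSum, map_signedSum,
    sum_signs_norm_sq, mul_add, Pi.star_apply]

lemma defect_softTrunc (x : A) :
    B.defect ξ η (softTrunc x) =
      B.L (gramResolvent (star x)) (B.R (op (gramResolvent x)) (B.defect ξ η x)) -
        B.L (softTrunc x) (B.R (op (softTrunc x)) (B.defect η ξ (star x))) := by
  set F := softTrunc x with hF
  set G := gramResolvent x
  set G' := gramResolvent (star x) with hG'
  have hξ : ξ = B.R (op G) ξ + B.R (op F) (B.R (op (star x)) ξ) := by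
    rw [← mul_apply_eq_comp, ← map_mul, ← op_mul, ← add_apply, ← map_add, ← op_add,
      gramResolvent_add_star_mul_softTrunc, op_one, map_one, one_apply_eq_self]
  have hη : η = B.L G' η + B.L F (B.L (star x) η) := by
    have hinv : G' + F * star x = 1 := by
      simpa [star_softTrunc, (isSelfAdjoint_gramResolvent _).star_eq, hG', hF] using
        congrArg star (gramResolvent_add_star_mul_softTrunc (star x))
    rw [← mul_apply_eq_comp, ← map_mul, ← add_apply, ← map_add, hinv, map_one, one_apply_eq_self]
  have hLF (v : E) : B.L G' (B.L x v) = B.L F v := by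
    rw [← mul_apply_eq_comp, ← map_mul, hF, softTrunc_eq_gramResolvent_star_mul]
  have hRF (v : E) : B.R (op G) (B.R (op x) v) = B.R (op F) v := by
    rw [← mul_apply_eq_comp, ← map_mul, ← op_mul, hF, softTrunc]
  calc B.defect ξ η F = B.L F (B.R (op G) ξ + B.R (op F) (B.R (op (star x)) ξ)) -
        B.R (op F) (B.L G' η + B.L F (B.L (star x) η)) := by
        rw [← hξ, ← hη, defect_apply]
    _ = _ := by
        simp only [defect_apply, map_add, map_sub, B.L_apply_R_apply, hLF, hRF]
        abel

variable [PartialOrder A] [StarOrderedRing A]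

lemma norm_defect_softTrunc_sq_le (x : A) :
    ‖B.defect ξ η (softTrunc x)‖ ^ 2 ≤
      ‖B.R (op (gramResolvent x)) (B.defect ξ η x)‖ ^ 2 +
        ‖B.R (op (softTrunc x)) (B.defect η ξ (star x))‖ ^ 2 := by
  rw [defect_softTrunc]
  refine norm_sub_sq_le_of_row_le_one B.L ?_ _ _
  have hrow := gramResolvent_sq_add_softTrunc (star x)
  rw [star_softTrunc, star_star] at hrow
  rw [(isSelfAdjoint_gramResolvent _).star_eq, star_softTrunc, hrow]
  exact gramResolvent_le_one _

lemma norm_gramResolvent_sq_add_norm_softTrunc_sq_le (x : A) (v : E) :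
    ‖B.R (op (gramResolvent x)) v‖ ^ 2 + ‖B.R (op (softTrunc (star x))) v‖ ^ 2 ≤ ‖v‖ ^ 2 := by
  refine norm_apply_sq_add_norm_apply_sq_le B.R ?_ v
  rw [← op_star, ← op_star, ← op_mul, ← op_mul, ← op_add, ← op_one, op_le_op, star_softTrunc,
    star_star, ← star_softTrunc, (isSelfAdjoint_gramResolvent _).star_eq,
    gramResolvent_sq_add_softTrunc]
  exact gramResolvent_le_one x

/-- This monotonicity is why a rational function is used as the cut-off. -/
lemma defectEnergy_softTrunc_le (x : A) :
    B.defectEnergy ξ η (softTrunc x) ≤ B.defectEnergy ξ η x := by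
  have h₁ := B.norm_defect_softTrunc_sq_le ξ η x
  have h₂ := B.norm_defect_softTrunc_sq_le η ξ (star x)
  have hu := B.norm_gramResolvent_sq_add_norm_softTrunc_sq_le x (B.defect ξ η x)
  have hv := B.norm_gramResolvent_sq_add_norm_softTrunc_sq_le (star x) (B.defect η ξ (star x))
  rw [star_star] at h₂ hv
  rw [defectEnergy, defectEnergy, star_softTrunc]
  linarith

end Defect

end CStarBimodule

section L2Norm

variable {ι E : Type*} [Fintype ι] [NormedAddCommGroup E]

/-- The `ℓ²`-norm of a finite family of vectors. -/
def l2Norm (v : ι → E) : ℝ := ‖WithLp.toLp 2 v‖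

lemma l2Norm_nonneg (v : ι → E) : 0 ≤ l2Norm v := norm_nonneg _

lemma l2Norm_sq (v : ι → E) : l2Norm v ^ 2 = ∑ j, ‖v j‖ ^ 2 := PiLp.norm_sq_eq_of_L2 _ _

lemma l2Norm_add_le (v w : ι → E) : l2Norm (fun j => v j + w j) ≤ l2Norm v + l2Norm w :=
  norm_add_le (WithLp.toLp 2 v) (WithLp.toLp 2 w)

lemma l2Norm_sub_le (v w : ι → E) : l2Norm (fun j => v j - w j) ≤ l2Norm v + l2Norm w :=
  norm_sub_le (WithLp.toLp 2 v) (WithLp.toLp 2 w)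

lemma l2Norm_mono {v w : ι → E} (h : ∀ j, ‖v j‖ ≤ ‖w j‖) : l2Norm v ≤ l2Norm w := by
  refine le_of_sq_le_sq ?_ (l2Norm_nonneg w)
  rw [l2Norm_sq, l2Norm_sq]
  exact Finset.sum_le_sum fun j _ => pow_le_pow_left₀ (norm_nonneg _) (h j) 2

end L2Norm

section Balancing

variable {ι A E : Type*} [Fintype ι] [CStarAlgebra A] [NormedAddCommGroup E]
  [InnerProductSpace ℂ E] [CompleteSpace E]

lemma isSelfAdjoint_op {x : A} (hx : IsSelfAdjoint x) : IsSelfAdjoint (op x) := congrArg op hx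

lemma columnGram_op (a : ι → A) : columnGram (fun j => op (a j)) = op (columnGram (star a)) := by
  rw [columnGram_star, columnGram, Finset.op_sum]
  simp only [op_mul, op_star]

/-- The family `a` rescaled on both sides so that its row and its column become contractions. -/
def balanced (a : ι → A) (j : ι) : A :=
  clip (columnGram (star a)) * a j * clip (columnGram a)

lemma star_balanced (a : ι → A) : star (balanced a) = balanced (star a) := by
  ext j
  simp only [Pi.star_apply, balanced, star_mul, star_star, (isSelfAdjoint_clip _).star_eq,
    mul_assoc]

lemma l2Norm_apply_sq (π : A →⋆ₐ[ℂ] (E →L[ℂ] E)) (a : ι → A) (ξ : E) :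
    l2Norm (fun j => π (a j) ξ) ^ 2 = vectorFunctional π ξ (columnGram a) := by
  simp only [l2Norm_sq, columnGram, map_sum, vectorFunctional_star_mul_self]

lemma l2Norm_apply_apply_le (π : A →⋆ₐ[ℂ] (E →L[ℂ] E)) {a : ι → A} {D : E →L[ℂ] E} {ξ : E}
    {ε : ℝ} (hD : IsSelfAdjoint D) (hcomm : Commute (π (columnGram a)) D) (hξ : ‖ξ‖ = 1)
    (hε : ε ≤ 1) (hgram : ‖π (1 - columnGram a) ξ‖ ≤ ε) (hDD : ‖D (D ξ)‖ ≤ ε) :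
    l2Norm (fun j => π (a j) (D ξ)) ≤ √(2 * ε) := by
  have hbound : ‖π (columnGram a) ξ‖ ≤ 2 := by
    calc ‖π (columnGram a) ξ‖ = ‖ξ - π (1 - columnGram a) ξ‖ := by simp
      _ ≤ ‖ξ‖ + ‖π (1 - columnGram a) ξ‖ := norm_sub_le _ _
      _ ≤ 2 := by linarith
  refine Real.le_sqrt_of_sq_le ?_
  rw [l2Norm_sq]
  calc ∑ j, ‖π (a j) (D ξ)‖ ^ 2 ≤ ‖π (columnGram a) ξ‖ * ‖D (D ξ)‖ :=
        sum_norm_sq_apply_apply_le _ (by simp [columnGram, map_star]) hD hcomm ξ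
    _ ≤ 2 * ε := by gcongr

lemma isSelfAdjoint_one_sub_clip (x : A) : IsSelfAdjoint (1 - clip x) :=
  (IsSelfAdjoint.one A).sub (isSelfAdjoint_clip x)

variable [PartialOrder A] [StarOrderedRing A]

lemma columnGram_balanced_le_one (a : ι → A) : columnGram (balanced a) ≤ 1 := by
  set k := clip (columnGram a)
  set h := clip (columnGram (star a))
  have hkstar : star k = k := (isSelfAdjoint_clip _).star_eq
  have hhstar : star h = h := (isSelfAdjoint_clip _).star_eq
  have hinner : ∑ j, star (a j) * (h * h) * a j ≤ columnGram a :=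
    Finset.sum_le_sum fun j _ => by
      simpa only [mul_one] using star_left_conjugate_le_conjugate (clip_mul_clip_le_one _) (a j)
  calc columnGram (balanced a) = ∑ j, star (h * a j * k) * (h * a j * k) := rfl
    _ = k * (∑ j, star (a j) * (h * h) * a j) * k := by
        simp only [star_mul, hkstar, hhstar, Finset.mul_sum, Finset.sum_mul, mul_assoc]
    _ ≤ k * columnGram a * k := by
        simpa only [hkstar] using star_left_conjugate_le_conjugate hinner k
    _ ≤ 1 := clip_mul_self_mul_clip_le_one (isSelfAdjoint_columnGram a)

lemma star_sq_one_sub_clip_mul_self_le {x : A} (hx : IsSelfAdjoint x) :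
    star ((1 - clip x) ^ 2) * (1 - clip x) ^ 2 ≤ star (1 - x) * (1 - x) := by
  have hclip := (isSelfAdjoint_one_sub_clip x).star_eq
  rw [star_pow, hclip, ← pow_add, ((IsSelfAdjoint.one A).sub hx).star_eq, ← pow_two]
  exact one_sub_clip_pow_four_le hx

end Balancing

namespace CStarBimodule

section Normalisation

variable {ι A E : Type*} [Fintype ι] [CStarAlgebra A] [NormedAddCommGroup E]
  [InnerProductSpace ℂ E] [CompleteSpace E] {B : CStarBimodule A E} {a : ι → A} {ξ η : E} {ε : ℝ}

/-- The family `a` is a column isometry at `ξ` and a row isometry at `η`, for both actions and up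
to `ε`. -/
structure IsApproxUnit (B : CStarBimodule A E) (ε : ℝ) (a : ι → A) (ξ η : E) : Prop where
  left_gram : ‖B.L (1 - columnGram a) ξ‖ ≤ ε
  right_gram : ‖B.R (op (1 - columnGram a)) ξ‖ ≤ ε
  left_cogram : ‖B.L (1 - columnGram (star a)) η‖ ≤ ε
  right_cogram : ‖B.R (op (1 - columnGram (star a))) η‖ ≤ ε

protected lemma IsApproxUnit.star (h : B.IsApproxUnit ε a ξ η) : B.IsApproxUnit ε (star a) η ξ where
  left_gram := h.left_cogram
  right_gram := h.right_cogram
  left_cogram := by simpa only [star_star] using h.left_gram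
  right_cogram := by simpa only [star_star] using h.right_gram

lemma norm_defect_sq (x : A) :
    ‖B.defect ξ η x‖ ^ 2 = vectorFunctional B.L ξ (star x * x) +
      vectorFunctional B.R η (op (x * star x)) - 2 * (⟪B.L x ξ, B.R (op x) η⟫_ℂ).re := by
  rw [op_mul, op_star, vectorFunctional_star_mul_self, vectorFunctional_star_mul_self,
    defect_apply, norm_sub_sq (𝕜 := ℂ), RCLike.re_to_complex]
  ring

lemma re_inner_star_apply (x : A) :
    (⟪B.L (star x) η, B.R (op (star x)) ξ⟫_ℂ).re = (⟪B.L x ξ, B.R (op x) η⟫_ℂ).re := by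
  rw [map_star, ContinuousLinearMap.star_eq_adjoint, ContinuousLinearMap.adjoint_inner_left,
    L_apply_R_apply, op_star, map_star, ContinuousLinearMap.star_eq_adjoint,
    ContinuousLinearMap.adjoint_inner_right, ← inner_conj_symm, Complex.conj_re]

/-- Commuting the two actions moves the cross term of `‖aξ - ηa‖²` to that of `‖a⋆η - ξa⋆‖²`. -/
lemma IsApproxUnit.l2Norm_defect_star_sq_le (h : B.IsApproxUnit ε a ξ η) (hξ : ‖ξ‖ = 1)
    (hη : ‖η‖ = 1) :
    l2Norm (fun j => B.defect η ξ (star (a j))) ^ 2 ≤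
      l2Norm (fun j => B.defect ξ η (a j)) ^ 2 + 4 * ε := by
  have hpoint (j : ι) : ‖B.defect η ξ (star (a j))‖ ^ 2 =
      ‖B.defect ξ η (a j)‖ ^ 2 + (vectorFunctional B.L η (a j * star (a j)) +
        vectorFunctional B.R ξ (op (star (a j) * a j)) -
        vectorFunctional B.L ξ (star (a j) * a j) -
        vectorFunctional B.R η (op (a j * star (a j)))) := by
    rw [norm_defect_sq, norm_defect_sq, re_inner_star_apply, star_star]
    ring
  have hsum : l2Norm (fun j => B.defect η ξ (star (a j))) ^ 2 =
      l2Norm (fun j => B.defect ξ η (a j)) ^ 2 +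
        (vectorFunctional B.L η (columnGram (star a)) +
        vectorFunctional B.R ξ (op (columnGram a)) - vectorFunctional B.L ξ (columnGram a) -
        vectorFunctional B.R η (op (columnGram (star a)))) := by
    rw [columnGram_star, columnGram, Finset.op_sum, Finset.op_sum, map_sum, map_sum, map_sum,
      map_sum]
    simp only [l2Norm_sq, hpoint, Finset.sum_add_distrib, Finset.sum_sub_distrib]
  have hLξ := abs_le.1 <| (abs_vectorFunctional_sub_one_le B.L hξ _).trans h.left_gram
  have hRξ := abs_le.1 <|
    (abs_vectorFunctional_sub_one_le B.R hξ (op (columnGram a))).trans h.right_gram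
  have hLη := abs_le.1 <| (abs_vectorFunctional_sub_one_le B.L hη _).trans h.left_cogram
  have hRη := abs_le.1 <|
    (abs_vectorFunctional_sub_one_le B.R hη (op (columnGram (star a)))).trans h.right_cogram
  linarith [hLξ.1, hRξ.2, hLη.2, hRη.1]

lemma IsApproxUnit.one_sub_le_l2Norm_R (h : B.IsApproxUnit ε a ξ η) (hη : ‖η‖ = 1) (hε : ε ≤ 1) :
    1 - ε ≤ l2Norm (fun j => B.R (op (a j)) η) := by
  have hε₀ : 0 ≤ ε := (norm_nonneg _).trans h.left_gram
  have hRη := abs_le.1 <|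
    (abs_vectorFunctional_sub_one_le B.R hη (op (columnGram (star a)))).trans h.right_cogram
  refine le_of_sq_le_sq ?_ (l2Norm_nonneg _)
  rw [l2Norm_apply_sq, columnGram_op]
  calc (1 - ε) ^ 2 ≤ 1 - ε := pow_le_of_le_one (by linarith) (by linarith) two_ne_zero
    _ ≤ vectorFunctional B.R η (op (columnGram (star a))) := by
      linarith [hRη.1]

variable [PartialOrder A] [StarOrderedRing A]

lemma norm_apply_apply_one_sub_clip_le (B : CStarBimodule A E) {x : A} (hx : IsSelfAdjoint x)
    (v : E) : ‖B.L (1 - clip x) (B.L (1 - clip x) v)‖ ≤ ‖B.L (1 - x) v‖ := by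
  rw [← mul_apply_eq_comp, ← map_mul, ← pow_two]
  exact norm_apply_le_of_star_mul_self_le B.L (star_sq_one_sub_clip_mul_self_le hx) v

lemma norm_apply_apply_op_one_sub_clip_le (B : CStarBimodule A E) {x : A} (hx : IsSelfAdjoint x)
    (v : E) :
    ‖B.R (op (1 - clip x)) (B.R (op (1 - clip x)) v)‖ ≤ ‖B.R (op (1 - x)) v‖ := by
  have hsq : star (op ((1 - clip x) ^ 2)) * op ((1 - clip x) ^ 2) ≤
      star (op (1 - x)) * op (1 - x) := by
    have hclip := (isSelfAdjoint_one_sub_clip x).star_eq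
    have h := star_sq_one_sub_clip_mul_self_le hx
    rw [((IsSelfAdjoint.one A).sub hx).star_eq, star_pow, hclip] at h
    rw [← op_star, ← op_star, ((IsSelfAdjoint.one A).sub hx).star_eq, star_pow, hclip]
    exact op_le_op.2 h
  rw [← mul_apply_eq_comp, ← map_mul, ← op_mul, ← pow_two]
  exact norm_apply_le_of_star_mul_self_le B.R hsq v

lemma norm_L_clip_apply_le (B : CStarBimodule A E) (x : A) (v : E) : ‖B.L (clip x) v‖ ≤ ‖v‖ :=
  norm_apply_le_of_star_mul_self_le_one B.L
    (by rw [(isSelfAdjoint_clip x).star_eq]; exact clip_mul_clip_le_one x) v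

lemma norm_R_clip_apply_le (B : CStarBimodule A E) (x : A) (v : E) :
    ‖B.R (op (clip x)) v‖ ≤ ‖v‖ :=
  norm_apply_le_of_star_mul_self_le_one B.R (by
    rw [← op_star, (isSelfAdjoint_clip x).star_eq, ← op_mul, ← op_one, op_le_op]
    exact clip_mul_clip_le_one x) v

namespace IsApproxUnit

lemma l2Norm_L_L_le (h : B.IsApproxUnit ε a ξ η) (hξ : ‖ξ‖ = 1) (hε : ε ≤ 1) :
    l2Norm (fun j => B.L (a j) (B.L (1 - clip (columnGram a)) ξ)) ≤ √(2 * ε) :=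
  l2Norm_apply_apply_le B.L ((isSelfAdjoint_one_sub_clip _).map B.L)
    (((Commute.one_right _).sub_right (commute_clip (isSelfAdjoint_columnGram a))).map B.L)
    hξ hε h.left_gram
    ((B.norm_apply_apply_one_sub_clip_le (isSelfAdjoint_columnGram a) ξ).trans h.left_gram)

lemma l2Norm_L_R_le (h : B.IsApproxUnit ε a ξ η) (hξ : ‖ξ‖ = 1) (hε : ε ≤ 1) :
    l2Norm (fun j => B.L (a j) (B.R (op (1 - clip (columnGram a))) ξ)) ≤ √(2 * ε) :=
  l2Norm_apply_apply_le B.L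
    ((isSelfAdjoint_op (isSelfAdjoint_one_sub_clip _)).map B.R)
    (B.commute _ _) hξ hε h.left_gram
    ((B.norm_apply_apply_op_one_sub_clip_le (isSelfAdjoint_columnGram a) ξ).trans h.right_gram)

lemma l2Norm_R_L_le (h : B.IsApproxUnit ε a ξ η) (hη : ‖η‖ = 1) (hε : ε ≤ 1) :
    l2Norm (fun j => B.R (op (a j)) (B.L (1 - clip (columnGram (star a))) η)) ≤ √(2 * ε) :=
  l2Norm_apply_apply_le B.R ((isSelfAdjoint_one_sub_clip _).map B.L)
    (B.commute _ _).symm hη hε (by rw [columnGram_op, ← op_one, ← op_sub]; exact h.right_cogram)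
    ((B.norm_apply_apply_one_sub_clip_le (isSelfAdjoint_columnGram _) η).trans h.left_cogram)

lemma l2Norm_R_R_le (h : B.IsApproxUnit ε a ξ η) (hη : ‖η‖ = 1) (hε : ε ≤ 1) :
    l2Norm (fun j => B.R (op (a j)) (B.R (op (1 - clip (columnGram (star a)))) η)) ≤ √(2 * ε) :=
  l2Norm_apply_apply_le B.R
    ((isSelfAdjoint_op (isSelfAdjoint_one_sub_clip _)).map B.R)
    (by
      rw [columnGram_op]
      exact (((Commute.one_right _).sub_right
        (commute_clip (isSelfAdjoint_columnGram (star a)))).op).map B.R)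
    hη hε (by rw [columnGram_op, ← op_one, ← op_sub]; exact h.right_cogram)
    ((B.norm_apply_apply_op_one_sub_clip_le (isSelfAdjoint_columnGram _) η).trans h.right_cogram)

lemma l2Norm_defect_balanced_le (h : B.IsApproxUnit ε a ξ η) (hξ : ‖ξ‖ = 1) (hη : ‖η‖ = 1)
    (hε : ε ≤ 1) :
    l2Norm (fun j => B.defect ξ η (balanced a j)) ≤
      l2Norm (fun j => B.defect ξ η (a j)) + 4 * √(2 * ε) := by
  set k := clip (columnGram a) with hk
  set g := clip (columnGram (star a)) with hg
  have hsplit (j : ι) : B.defect ξ η (balanced a j) =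
      B.L g (B.R (op k) (B.defect ξ η (a j))) +
        B.L g (B.L (a j) (B.R (op (1 - k)) ξ) - B.L (a j) (B.L (1 - k) ξ)) -
        B.R (op k) (B.R (op (a j)) (B.L (1 - g) η) - B.R (op (a j)) (B.R (op (1 - g)) η)) := by
    simp only [defect_apply, balanced, ← hk, ← hg, op_mul, op_sub, op_one, map_mul, map_sub,
      map_one, mul_apply_eq_comp, sub_apply, one_apply_eq_self, L_apply_R_apply]
    abel
  simp only [hsplit]
  refine (l2Norm_sub_le _ _).trans ?_
  have hmain := (l2Norm_add_le (fun j => B.L g (B.R (op k) (B.defect ξ η (a j))))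
    fun j => B.L g (B.L (a j) (B.R (op (1 - k)) ξ) - B.L (a j) (B.L (1 - k) ξ)))
  have hdefect : l2Norm (fun j => B.L g (B.R (op k) (B.defect ξ η (a j)))) ≤
      l2Norm fun j => B.defect ξ η (a j) :=
    l2Norm_mono fun j => (B.norm_L_clip_apply_le _ _).trans (B.norm_R_clip_apply_le _ _)
  have hL : l2Norm (fun j => B.L g (B.L (a j) (B.R (op (1 - k)) ξ) - B.L (a j) (B.L (1 - k) ξ))) ≤
      √(2 * ε) + √(2 * ε) :=
    (l2Norm_mono fun j => B.norm_L_clip_apply_le _ _).trans <| (l2Norm_sub_le _ _).trans <|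
      add_le_add (h.l2Norm_L_R_le hξ hε) (h.l2Norm_L_L_le hξ hε)
  have hR : l2Norm (fun j => B.R (op k) (B.R (op (a j)) (B.L (1 - g) η) -
      B.R (op (a j)) (B.R (op (1 - g)) η))) ≤ √(2 * ε) + √(2 * ε) :=
    (l2Norm_mono fun j => B.norm_R_clip_apply_le _ _).trans <| (l2Norm_sub_le _ _).trans <|
      add_le_add (h.l2Norm_R_L_le hη hε) (h.l2Norm_R_R_le hη hε)
  linarith

lemma one_sub_le_l2Norm_balanced (h : B.IsApproxUnit ε a ξ η) (hξ : ‖ξ‖ = 1) (hη : ‖η‖ = 1)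
    (hε : ε ≤ 1) :
    1 - ε - 2 * √(2 * ε) - l2Norm (fun j => B.defect ξ η (a j)) ≤
      l2Norm (fun j => B.L (balanced a j) ξ) := by
  set k := clip (columnGram a) with hk
  set g := clip (columnGram (star a)) with hg
  have hsplit (j : ι) : B.R (op (a j)) η =
      B.L (balanced a j) ξ + (B.L g (B.L (a j) (B.L (1 - k) ξ) - B.defect ξ η (a j)) +
        B.R (op (a j)) (B.L (1 - g) η)) := by
    simp only [defect_apply, balanced, ← hk, ← hg, map_mul, map_sub, map_one, mul_apply_eq_comp,
      sub_apply, one_apply_eq_self, L_apply_R_apply]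
    abel
  have hlower := h.one_sub_le_l2Norm_R hη hε
  simp only [hsplit] at hlower
  have hadd := l2Norm_add_le (fun j => B.L (balanced a j) ξ) fun j =>
    B.L g (B.L (a j) (B.L (1 - k) ξ) - B.defect ξ η (a j)) + B.R (op (a j)) (B.L (1 - g) η)
  have hadd' := l2Norm_add_le (fun j => B.L g (B.L (a j) (B.L (1 - k) ξ) - B.defect ξ η (a j)))
    fun j => B.R (op (a j)) (B.L (1 - g) η)
  have hL : l2Norm (fun j => B.L g (B.L (a j) (B.L (1 - k) ξ) - B.defect ξ η (a j))) ≤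
      √(2 * ε) + l2Norm fun j => B.defect ξ η (a j) :=
    (l2Norm_mono fun j => B.norm_L_clip_apply_le _ _).trans <| (l2Norm_sub_le _ _).trans <|
      add_le_add_left (h.l2Norm_L_L_le hξ hε) _
  have hR := h.l2Norm_R_L_le hη hε
  linarith

end IsApproxUnit

/-- A family which is a row and a column contraction, has small defect energy, and whose Gram
operators are close to `1` at `ξ` and `η`. This is what random signs are applied to. -/
structure IsNormalized (B : CStarBimodule A E) (s : ℝ) (a : ι → A) (ξ η : E) : Prop where
  gram_le_one : columnGram a ≤ 1
  cogram_le_one : columnGram (star a) ≤ 1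
  energy_le : ∑ j, B.defectEnergy ξ η (a j) ≤ 4 * s ^ 2
  le_gram : 1 - 3 * s ≤ vectorFunctional B.L ξ (columnGram a)
  le_cogram : 1 - 3 * s ≤ vectorFunctional B.L η (columnGram (star a))

variable {s : ℝ}

lemma sqrt_two_mul_sq_div (hs₀ : 0 ≤ s) : √(2 * (s ^ 2 / 450)) = s / 15 := by
  rw [← Real.sqrt_sq (by positivity : 0 ≤ s / 15)]
  ring_nf

namespace IsApproxUnit

lemma l2Norm_defect_balanced_sq_le (h : B.IsApproxUnit (s ^ 2 / 450) a ξ η) (hξ : ‖ξ‖ = 1)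
    (hη : ‖η‖ = 1) (hs₀ : 0 ≤ s) (hs₁ : s ≤ 1)
    (hdefect : l2Norm (fun j => B.defect ξ η (a j)) ≤ 17 / 15 * s) :
    l2Norm (fun j => B.defect ξ η (balanced a j)) ^ 2 ≤ 2 * s ^ 2 := by
  have hle := h.l2Norm_defect_balanced_le hξ hη (by nlinarith)
  rw [sqrt_two_mul_sq_div hs₀] at hle
  calc l2Norm (fun j => B.defect ξ η (balanced a j)) ^ 2 ≤ (7 / 5 * s) ^ 2 :=
        pow_le_pow_left₀ (l2Norm_nonneg _) (by linarith) 2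
    _ ≤ 2 * s ^ 2 := by nlinarith [sq_nonneg s]

lemma le_vectorFunctional_columnGram_balanced (h : B.IsApproxUnit (s ^ 2 / 450) a ξ η)
    (hξ : ‖ξ‖ = 1) (hη : ‖η‖ = 1) (hs₀ : 0 ≤ s) (hs₁ : s ≤ 1)
    (hdefect : l2Norm (fun j => B.defect ξ η (a j)) ≤ 17 / 15 * s) :
    1 - 3 * s ≤ vectorFunctional B.L ξ (columnGram (balanced a)) := by
  have hle := h.one_sub_le_l2Norm_balanced hξ hη (by nlinarith)
  rw [sqrt_two_mul_sq_div hs₀] at hle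
  rw [← l2Norm_apply_sq]
  nlinarith [sq_nonneg (l2Norm (fun j => B.L (balanced a j) ξ) - 1)]

lemma isNormalized_balanced (h : B.IsApproxUnit (s ^ 2 / 450) a ξ η) (hξ : ‖ξ‖ = 1)
    (hη : ‖η‖ = 1) (hs₀ : 0 ≤ s) (hs₁ : s ≤ 1)
    (hdefect : ∑ j, ‖B.defect ξ η (a j)‖ ^ 2 ≤ s ^ 2) : B.IsNormalized s (balanced a) ξ η := by
  rw [← l2Norm_sq] at hdefect
  have hle : l2Norm (fun j => B.defect ξ η (a j)) ≤ 17 / 15 * s :=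
    (le_of_sq_le_sq hdefect hs₀).trans (by linarith)
  have hle_star : l2Norm (fun j => B.defect η ξ (star a j)) ≤ 17 / 15 * s := by
    refine le_of_sq_le_sq ((h.l2Norm_defect_star_sq_le hξ hη).trans ?_) (by linarith)
    nlinarith [sq_nonneg s]
  refine ⟨columnGram_balanced_le_one a, ?_, ?_,
    h.le_vectorFunctional_columnGram_balanced hξ hη hs₀ hs₁ hle, ?_⟩
  · rw [star_balanced]
    exact columnGram_balanced_le_one _
  · have henergy : ∑ j, B.defectEnergy ξ η (balanced a j) =
        l2Norm (fun j => B.defect ξ η (balanced a j)) ^ 2 +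
          l2Norm (fun j => B.defect η ξ (balanced (star a) j)) ^ 2 := by
      simp only [defectEnergy, Finset.sum_add_distrib, l2Norm_sq, ← star_balanced, Pi.star_apply]
    have hξη := h.l2Norm_defect_balanced_sq_le hξ hη hs₀ hs₁ hle
    have hηξ := h.star.l2Norm_defect_balanced_sq_le hη hξ hs₀ hs₁ hle_star
    linarith
  · rw [star_balanced]
    exact h.star.le_vectorFunctional_columnGram_balanced hη hξ hs₀ hs₁ hle_star

end IsApproxUnit

end Normalisation

end CStarBimodule

section Truncation

variable {A : Type*} [CStarAlgebra A]

/-- The truncation `y (1 + y⋆y/4)⁻¹`, i.e. `softTrunc` normalised to take values in the unit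
ball. -/
def truncate (y : A) : A := (2 : ℝ) • softTrunc ((1 / 2 : ℝ) • y)

lemma star_truncate (y : A) : star (truncate y) = truncate (star y) := by
  simp only [truncate, star_smul, star_trivial, star_softTrunc]

lemma norm_truncate_le_one (y : A) : ‖truncate y‖ ≤ 1 := by
  rw [truncate, norm_smul, Real.norm_ofNat]
  linarith [norm_softTrunc_le ((1 / 2 : ℝ) • y)]

lemma star_truncate_mul_truncate (y : A) :
    star (truncate y) * truncate y =
      (4 : ℝ) • (star (softTrunc ((1 / 2 : ℝ) • y)) * softTrunc ((1 / 2 : ℝ) • y)) := by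
  rw [truncate, star_smul (2 : ℝ), star_trivial (2 : ℝ), smul_mul_smul_comm]
  norm_num

lemma star_mul_self_eq_four_smul (y : A) :
    star y * y = (4 : ℝ) • (star ((1 / 2 : ℝ) • y) * ((1 / 2 : ℝ) • y)) := by
  rw [star_smul, star_trivial (1 / 2 : ℝ), smul_mul_smul_comm, smul_smul]
  norm_num

variable [PartialOrder A] [StarOrderedRing A]

lemma star_truncate_mul_truncate_le (y : A) :
    star (truncate y) * truncate y ≤ star y * y := by
  rw [star_truncate_mul_truncate, star_mul_self_eq_four_smul y]
  exact smul_le_smul_of_nonneg_left (star_softTrunc_mul_softTrunc_le _) zero_le_four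

lemma sq_star_truncate_mul_truncate_le (y : A) :
    (star (truncate y) * truncate y) ^ 2 ≤ (star y * y) ^ 2 := by
  rw [star_truncate_mul_truncate, star_mul_self_eq_four_smul y, smul_pow, smul_pow]
  exact smul_le_smul_of_nonneg_left (sq_star_softTrunc_mul_softTrunc_le _) (by positivity)

lemma sub_half_smul_sq_le_star_truncate_mul_truncate (y : A) :
    star y * y - (1 / 2 : ℝ) • (star y * y) ^ 2 ≤ star (truncate y) * truncate y := by
  rw [star_truncate_mul_truncate, star_mul_self_eq_four_smul y, smul_pow]
  refine le_of_eq_of_le ?_ (smul_le_smul_of_nonneg_left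
    (sub_two_smul_sq_le_star_softTrunc_mul_softTrunc ((1 / 2 : ℝ) • y)) zero_le_four)
  module

lemma CStarBimodule.defectEnergy_truncate_le {E : Type*} [NormedAddCommGroup E]
    [InnerProductSpace ℂ E] [CompleteSpace E] (B : CStarBimodule A E) (ξ η : E) (y : A) :
    B.defectEnergy ξ η (truncate y) ≤ B.defectEnergy ξ η y := by
  have h := B.defectEnergy_softTrunc_le ξ η ((1 / 2 : ℝ) • y)
  rw [defectEnergy_smul] at h
  rw [truncate, defectEnergy_smul]
  linarith

end Truncation

section RandomSamples

variable {A : Type*} [CStarAlgebra A] {p : ℕ}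

/-- One random sample: the signed sum of `a` scaled by `1/√r` and truncated to the unit ball. -/
def signSample (a : Fin p → A) (r : ℕ) (ε : Fin p → ℤˣ) : A :=
  truncate ((√r)⁻¹ • signedSum a ε)

/-- The expected Gram operator of `r` independent samples. -/
def expectedGram (a : Fin p → A) (r : ℕ) : A :=
  (r / 2 ^ p : ℝ) • ∑ ε, star (signSample a r ε) * signSample a r ε

lemma star_signSample (a : Fin p → A) (r : ℕ) (ε : Fin p → ℤˣ) :
    star (signSample a r ε) = signSample (star a) r ε := by
  simp only [signSample, star_truncate, star_smul, star_trivial, star_signedSum]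

lemma star_mul_self_inv_sqrt_smul (r : ℕ) (x : A) :
    star ((√r)⁻¹ • x) * ((√r)⁻¹ • x) = (r : ℝ)⁻¹ • (star x * x) := by
  rw [star_smul, star_trivial, smul_mul_smul_comm, ← mul_inv, Real.mul_self_sqrt (by positivity)]

lemma sum_signs_gram_inv_sqrt_smul (a : Fin p → A) (r : ℕ) :
    ∑ ε, star ((√r)⁻¹ • signedSum a ε) * ((√r)⁻¹ • signedSum a ε) =
      (2 ^ p / r : ℝ) • columnGram a := by
  simp only [star_mul_self_inv_sqrt_smul, ← Finset.smul_sum, sum_signs_star_mul_self, smul_smul]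
  congr 1
  ring

variable [PartialOrder A] [StarOrderedRing A] {a : Fin p → A} {r : ℕ}

lemma expectedGram_nonneg (a : Fin p → A) (r : ℕ) : 0 ≤ expectedGram a r :=
  smul_nonneg (by positivity) (Finset.sum_nonneg fun _ _ => star_mul_self_nonneg _)

lemma expectedGram_le (a : Fin p → A) (hr : 0 < r) : expectedGram a r ≤ columnGram a := by
  calc expectedGram a r ≤ (r / 2 ^ p : ℝ) • ∑ ε,
        star ((√r)⁻¹ • signedSum a ε) * ((√r)⁻¹ • signedSum a ε) :=
        smul_le_smul_of_nonneg_left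
          (Finset.sum_le_sum fun ε _ => star_truncate_mul_truncate_le _) (by positivity)
    _ = columnGram a := by
        rw [sum_signs_gram_inv_sqrt_smul, smul_smul, div_mul_div_cancel₀ (by positivity),
          div_self (by positivity), one_smul]

lemma sum_signs_sq_gram_inv_sqrt_smul_le (hS : columnGram a ≤ 1) (hT : columnGram (star a) ≤ 1)
    (r : ℕ) :
    ∑ ε, (star ((√r)⁻¹ • signedSum a ε) * ((√r)⁻¹ • signedSum a ε)) ^ 2 ≤
      (2 ^ p * (3 / r ^ 2) : ℝ) • 1 := by
  simp only [star_mul_self_inv_sqrt_smul, smul_pow, ← Finset.smul_sum]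
  refine (smul_le_smul_of_nonneg_left (sum_signs_sq_gram_le_smul_one hS hT)
    (by positivity)).trans_eq ?_
  rw [smul_smul]
  congr 1
  ring

lemma columnGram_sub_le_expectedGram (hS : columnGram a ≤ 1) (hT : columnGram (star a) ≤ 1)
    (hr : 0 < r) : columnGram a - (3 / (2 * r) : ℝ) • 1 ≤ expectedGram a r := by
  let y : (Fin p → ℤˣ) → A := fun ε => (√r)⁻¹ • signedSum a ε
  have hscalar : (r / 2 ^ p : ℝ) * (2 ^ p / r) = 1 := by field_simp
  have hscalar' : (r / 2 ^ p : ℝ) * (1 / 2) * (2 ^ p * (3 / r ^ 2)) = 3 / (2 * r) := by field_simp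
  calc columnGram a - (3 / (2 * r) : ℝ) • 1 = (r / 2 ^ p : ℝ) • ((2 ^ p / r : ℝ) • columnGram a -
        (1 / 2 : ℝ) • (2 ^ p * (3 / r ^ 2) : ℝ) • (1 : A)) := by
        rw [smul_sub, smul_smul, smul_smul, smul_smul, hscalar, hscalar', one_smul]
    _ ≤ (r / 2 ^ p : ℝ) • (∑ ε, star (y ε) * y ε -
        (1 / 2 : ℝ) • ∑ ε, (star (y ε) * y ε) ^ 2) := by
        rw [sum_signs_gram_inv_sqrt_smul]
        refine smul_le_smul_of_nonneg_left (sub_le_sub_left (smul_le_smul_of_nonneg_left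
          (sum_signs_sq_gram_inv_sqrt_smul_le hS hT r) (by positivity)) _) (by positivity)
    _ ≤ expectedGram a r := by
        rw [Finset.smul_sum, ← Finset.sum_sub_distrib]
        exact smul_le_smul_of_nonneg_left (Finset.sum_le_sum fun ε _ =>
          sub_half_smul_sq_le_star_truncate_mul_truncate _) (by positivity)

variable {E : Type*} [NormedAddCommGroup E] [InnerProductSpace ℂ E] [CompleteSpace E]
  (π : A →⋆ₐ[ℂ] (E →L[ℂ] E)) {ξ : E}

lemma sum_norm_sq_gram_signSample_le (hS : columnGram a ≤ 1) (hT : columnGram (star a) ≤ 1)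
    (hξ : ‖ξ‖ = 1) (r : ℕ) :
    ∑ ε, ‖π (star (signSample a r ε) * signSample a r ε) ξ‖ ^ 2 ≤ 2 ^ p * (3 / r ^ 2) := by
  have hterm (ε : Fin p → ℤˣ) : ‖π (star (signSample a r ε) * signSample a r ε) ξ‖ ^ 2 =
      vectorFunctional π ξ ((star (signSample a r ε) * signSample a r ε) ^ 2) := by
    rw [← vectorFunctional_star_mul_self, (IsSelfAdjoint.star_mul_self _).star_eq, pow_two]
  calc ∑ ε, ‖π (star (signSample a r ε) * signSample a r ε) ξ‖ ^ 2 =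
        vectorFunctional π ξ (∑ ε, (star (signSample a r ε) * signSample a r ε) ^ 2) := by
        simp only [hterm, map_sum]
    _ ≤ vectorFunctional π ξ ((2 ^ p * (3 / r ^ 2) : ℝ) • 1) :=
        vectorFunctional_mono π <| (Finset.sum_le_sum fun ε _ =>
          sq_star_truncate_mul_truncate_le _).trans (sum_signs_sq_gram_inv_sqrt_smul_le hS hT r)
    _ = 2 ^ p * (3 / r ^ 2) := by
        rw [map_smul, vectorFunctional_one, hξ, one_pow, smul_eq_mul, mul_one]

lemma sum_defectEnergy_signSample_le (B : CStarBimodule A E) (ξ η : E) (a : Fin p → A) (r : ℕ) :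
    ∑ ε, B.defectEnergy ξ η (signSample a r ε) ≤
      2 ^ p * ((r : ℝ)⁻¹ * ∑ j, B.defectEnergy ξ η (a j)) := by
  calc ∑ ε, B.defectEnergy ξ η (signSample a r ε) ≤
        ∑ ε, B.defectEnergy ξ η ((√r)⁻¹ • signedSum a ε) :=
        Finset.sum_le_sum fun ε _ => B.defectEnergy_truncate_le ξ η _
    _ = 2 ^ p * ((r : ℝ)⁻¹ * ∑ j, B.defectEnergy ξ η (a j)) := by
        simp only [CStarBimodule.defectEnergy_smul, ← Finset.mul_sum, inv_pow,
          Real.sq_sqrt (Nat.cast_nonneg r), CStarBimodule.sum_signs_defectEnergy]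
        ring

lemma norm_expectedGram_apply_sub_sq_le (hS : columnGram a ≤ 1) (hT : columnGram (star a) ≤ 1)
    (hr : 0 < r) (hξ : ‖ξ‖ = 1) :
    ‖π (expectedGram a r) ξ - ξ‖ ^ 2 ≤
      1 - vectorFunctional π ξ (columnGram a) + 3 / (2 * r) := by
  have hone : vectorFunctional π ξ 1 = 1 := by rw [vectorFunctional_one, hξ, one_pow]
  have hlower := vectorFunctional_mono π (ξ := ξ) (columnGram_sub_le_expectedGram hS hT hr)
  rw [map_sub, map_smul, hone, smul_eq_mul, mul_one] at hlower
  have h := norm_apply_sub_sq_le π (expectedGram_nonneg a r) ((expectedGram_le a hr).trans hS) ξ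
  rw [hξ, one_pow] at h
  linarith

end RandomSamples

namespace CStarBimodule

section Selection

variable {A E : Type*} [CStarAlgebra A] [NormedAddCommGroup E] [InnerProductSpace ℂ E]
  [CompleteSpace E] {B : CStarBimodule A E}
  {p r : ℕ} {a : Fin p → A} {ξ η : E} {s : ℝ}

/-- The vectors `c⋆cξ` and `cc⋆η`, whose sums over the chosen `c` should approximate `ξ` and
`η`. -/
def gramPair (B : CStarBimodule A E) (ξ η : E) (c : A) : WithLp 2 (E × E) :=
  WithLp.toLp 2 (B.L (star c * c) ξ, B.L (c * star c) η)

lemma norm_sum_gramPair_sub_sq {ι : Type*} [Fintype ι] (B : CStarBimodule A E) (ξ η : E)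
    (c : ι → A) :
    ‖∑ l, B.gramPair ξ η (c l) - WithLp.toLp 2 (ξ, η)‖ ^ 2 =
      ‖B.L (columnGram c - 1) ξ‖ ^ 2 + ‖B.L (columnGram (star c) - 1) η‖ ^ 2 := by
  have hsum : ∑ l, B.gramPair ξ η (c l) - WithLp.toLp 2 (ξ, η) =
      WithLp.toLp 2 (B.L (columnGram c - 1) ξ, B.L (columnGram (star c) - 1) η) := by
    simp only [gramPair, ← WithLp.toLp_sum, ← WithLp.toLp_sub, columnGram, map_sub, map_sum,
      map_one, sub_apply, sum_apply, one_apply_eq_self]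
    congr 1
    ext <;> simp [Prod.fst_sum, Prod.snd_sum]
  rw [hsum, WithLp.prod_norm_sq_eq_of_L2]
  rfl

lemma sum_gramPair_signSample (B : CStarBimodule A E) (ξ η : E) (a : Fin p → A) (hr : 0 < r) :
    ∑ ε, B.gramPair ξ η (signSample a r ε) = Fintype.card (Fin p → ℤˣ) • (r : ℝ)⁻¹ •
      WithLp.toLp 2 (B.L (expectedGram a r) ξ, B.L (expectedGram (star a) r) η) := by
  have hcomponent (b : Fin p → A) :
      ∑ ε, star (signSample b r ε) * signSample b r ε =
        (2 ^ p * (r : ℝ)⁻¹) • expectedGram b r := by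
    rw [expectedGram, smul_smul]
    field_simp
    rw [one_smul]
  have hcogram : ∑ ε, signSample a r ε * star (signSample a r ε) =
      (2 ^ p * (r : ℝ)⁻¹) • expectedGram (star a) r := by
    rw [← hcomponent]
    simp only [← star_signSample, star_star]
  have happly (x : (Fin p → ℤˣ) → A) (y : A) (v : E)
      (hxy : ∑ ε, x ε = (2 ^ p * (r : ℝ)⁻¹) • y) :
      ∑ ε, B.L (x ε) v = Fintype.card (Fin p → ℤˣ) • (r : ℝ)⁻¹ • B.L y v := by
    rw [← sum_apply, ← map_sum, hxy, ← Complex.coe_smul, map_smul, smul_apply, Complex.coe_smul,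
      ← Nat.cast_smul_eq_nsmul ℝ, smul_smul]
    simp
  simp only [gramPair, ← WithLp.toLp_sum, ← WithLp.toLp_smul]
  congr 1
  ext
  · rw [Prod.fst_sum]
    exact happly _ _ ξ (hcomponent a)
  · rw [Prod.snd_sum]
    exact happly _ _ η hcogram

variable [PartialOrder A] [StarOrderedRing A]

lemma sum_norm_gramPair_signSample_sq_le (h : B.IsNormalized s a ξ η) (hξ : ‖ξ‖ = 1)
    (hη : ‖η‖ = 1) (r : ℕ) :
    ∑ ε, ‖B.gramPair ξ η (signSample a r ε)‖ ^ 2 ≤ 2 ^ p * (6 / r ^ 2) := by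
  have hfst := sum_norm_sq_gram_signSample_le B.L h.gram_le_one h.cogram_le_one hξ r
  have hsnd := sum_norm_sq_gram_signSample_le B.L h.cogram_le_one
    (by simpa only [star_star] using h.gram_le_one) hη r
  simp only [← star_signSample, star_star] at hsnd
  simp only [gramPair, WithLp.prod_norm_sq_eq_of_L2, Finset.sum_add_distrib]
  exact (add_le_add hfst hsnd).trans_eq (by ring)

lemma norm_expectedGram_pair_sub_sq_le (h : B.IsNormalized s a ξ η) (hξ : ‖ξ‖ = 1)
    (hη : ‖η‖ = 1) (hr : 0 < r) :
    ‖WithLp.toLp 2 (B.L (expectedGram a r) ξ, B.L (expectedGram (star a) r) η) -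
      WithLp.toLp 2 (ξ, η)‖ ^ 2 ≤ 6 * s + 3 / r := by
  have hfst := norm_expectedGram_apply_sub_sq_le B.L h.gram_le_one h.cogram_le_one hr hξ
  have hsnd := norm_expectedGram_apply_sub_sq_le B.L h.cogram_le_one
    (by simpa only [star_star] using h.gram_le_one) hr hη
  rw [← WithLp.toLp_sub, WithLp.prod_norm_sq_eq_of_L2]
  have hr' : (3 / r : ℝ) = 3 / (2 * r) + 3 / (2 * r) := by ring
  exact (add_le_add hfst hsnd).trans (by linarith [h.le_gram, h.le_cogram])

/-- Weighting the defect energy by `3 / (8 s² r)` makes its bound `32 s²` the same as the bound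
`12 / r` on the other term, so that one choice of samples controls both. -/
lemma IsNormalized.exists_samples_le (h : B.IsNormalized s a ξ η) (hξ : ‖ξ‖ = 1)
    (hη : ‖η‖ = 1) (hr : 0 < r) (hs₀ : 0 < s) :
    ∃ ω : Fin r → Fin p → ℤˣ,
      ‖∑ l, B.gramPair ξ η (signSample a r (ω l)) - WithLp.toLp 2 (ξ, η)‖ ^ 2 +
        ∑ l, 3 / (8 * s ^ 2 * r) * B.defectEnergy ξ η (signSample a r (ω l)) ≤
          6 * s + 3 / r + r * (15 / (2 * r ^ 2)) := by
  let _ : InnerProductSpace ℝ (WithLp 2 (E × E)) := .complexToReal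
  have henergy : ∑ ε, 3 / (8 * s ^ 2 * r) * B.defectEnergy ξ η (signSample a r ε) ≤
      2 ^ p * (3 / (2 * r ^ 2) : ℝ) := by
    calc ∑ ε, 3 / (8 * s ^ 2 * r) * B.defectEnergy ξ η (signSample a r ε) ≤
          3 / (8 * s ^ 2 * r) * (2 ^ p * ((r : ℝ)⁻¹ * (4 * s ^ 2))) := by
          rw [← Finset.mul_sum]
          gcongr
          refine (sum_defectEnergy_signSample_le B ξ η a r).trans ?_
          gcongr
          exact h.energy_le
      _ = 2 ^ p * (3 / (2 * r ^ 2)) := by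
          field_simp
          norm_num
  have hV : ∑ ε, (‖B.gramPair ξ η (signSample a r ε)‖ ^ 2 +
      3 / (8 * s ^ 2 * r) * B.defectEnergy ξ η (signSample a r ε)) ≤
      Fintype.card (Fin p → ℤˣ) * (15 / (2 * r ^ 2) : ℝ) := by
    rw [Finset.sum_add_distrib]
    refine (add_le_add (sum_norm_gramPair_signSample_sq_le h hξ hη r) henergy).trans_eq ?_
    simp only [Fintype.card_pi, Finset.prod_const, Finset.card_univ, Fintype.card_fin,
      Fintype.card_units_int]
    push_cast
    ring
  obtain ⟨ω, hω⟩ := exists_samples (B.sum_gramPair_signSample ξ η a hr) hV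
    (WithLp.toLp 2 (ξ, η)) r
  rw [← Nat.cast_smul_eq_nsmul ℝ, smul_inv_smul₀ (by positivity)] at hω
  exact ⟨ω, hω.trans (add_le_add_left (norm_expectedGram_pair_sub_sq_le h hξ hη hr) _)⟩

lemma IsNormalized.exists_contractions (h : B.IsNormalized s a ξ η) (hξ : ‖ξ‖ = 1)
    (hη : ‖η‖ = 1) (hr : 0 < r) (hs₀ : 0 < s) (hsr : s < 1 / (8 * r)) :
    ∃ c : Fin r → A, (∀ l, ‖c l‖ ≤ 1) ∧
      ‖B.L (columnGram c - 1) ξ‖ ^ 2 < 12 / r ∧ ‖B.L (columnGram (star c) - 1) η‖ ^ 2 < 12 / r ∧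
      ∑ l, B.defectEnergy ξ η (c l) < 32 * s ^ 2 := by
  obtain ⟨ω, hω⟩ := h.exists_samples_le hξ hη hr hs₀
  set c : Fin r → A := fun l => signSample a r (ω l)
  have htotal : 6 * s + 3 / r + r * (15 / (2 * r ^ 2)) < 12 / r := by
    have hs : s * (8 * r) < 1 := (lt_div_iff₀ (by positivity)).1 hsr
    field_simp
    linarith
  rw [norm_sum_gramPair_sub_sq B ξ η c, ← Finset.mul_sum] at hω
  have henergy₀ : 0 ≤ ∑ l, B.defectEnergy ξ η (c l) :=
    Finset.sum_nonneg fun _ _ => add_nonneg (sq_nonneg _) (sq_nonneg _)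
  have hweighted₀ : 0 ≤ 3 / (8 * s ^ 2 * r) * ∑ l, B.defectEnergy ξ η (c l) := by positivity
  have hfst₀ := sq_nonneg ‖B.L (columnGram c - 1) ξ‖
  have hsnd₀ := sq_nonneg ‖B.L (columnGram (star c) - 1) η‖
  refine ⟨c, fun l => norm_truncate_le_one _, by linarith, by linarith, ?_⟩
  have hweighted : 3 / (8 * s ^ 2 * r) * ∑ l, B.defectEnergy ξ η (c l) < 12 / r := by linarith
  calc ∑ l, B.defectEnergy ξ η (c l) =
        8 * s ^ 2 * r / 3 * (3 / (8 * s ^ 2 * r) * ∑ l, B.defectEnergy ξ η (c l)) := by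
        field_simp
    _ < 8 * s ^ 2 * r / 3 * (12 / r) := by gcongr
    _ = 32 * s ^ 2 := by
        field_simp
        norm_num

end Selection

end CStarBimodule

/-- The relation `HilbertBimodule.AlmostRelatedPair` over a general C⋆-algebra, keeping only those
of its estimates which concern `a⋆a` at `ξ` and `aa⋆` at `η`. -/
def CStarBimodule.AlmostRelated {A E : Type*} [CStarAlgebra A] [NormedAddCommGroup E]
    [InnerProductSpace ℂ E] [CompleteSpace E] (B : CStarBimodule A E) (δ : ℝ) (ξ η : E) : Prop :=
  ∀ ε > 0, ∃ (p : ℕ) (a : Fin p → A),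
    B.IsApproxUnit ε a ξ η ∧ ∑ j, ‖B.defect ξ η (a j)‖ ^ 2 < δ

theorem lemma2_5_general {A E : Type*} [CStarAlgebra A] [NormedAddCommGroup E]
    [InnerProductSpace ℂ E] [CompleteSpace E] (B : CStarBimodule A E) {δ : ℝ} {r : ℕ}
    (hδr : √δ < 1 / (8 * r)) {ξ η : E} (hξ : ‖ξ‖ = 1) (hη : ‖η‖ = 1)
    (hrel : B.AlmostRelated δ ξ η) :
    ∃ c : Fin r → A,
      (∀ j, ‖c j‖ ≤ 1) ∧
      ‖B.L (∑ j, star (c j) * c j - 1) ξ‖ ^ 2 < 12 / r ∧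
      ‖B.L (∑ j, c j * star (c j) - 1) η‖ ^ 2 < 12 / r ∧
      ∑ j, ‖B.defect ξ η (c j)‖ ^ 2 < 32 * δ ∧
      ∑ j, ‖B.defect η ξ (star (c j))‖ ^ 2 < 32 * δ := by
  let _ := CStarAlgebra.spectralOrder A
  have _ := CStarAlgebra.spectralOrderedRing A
  have hδ : 0 < δ := by
    obtain ⟨p, a, -, hdefect⟩ := hrel 1 one_pos
    exact (Finset.sum_nonneg fun _ _ => sq_nonneg _).trans_lt hdefect
  have hs₀ : 0 < √δ := Real.sqrt_pos.2 hδ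
  have hs_sq : √δ ^ 2 = δ := Real.sq_sqrt hδ.le
  have hr : 0 < r := Nat.pos_of_ne_zero fun hr => by
    rw [hr, Nat.cast_zero, mul_zero, div_zero] at hδr
    exact hδr.not_gt hs₀
  have hs₁ : √δ ≤ 1 := hδr.le.trans <| by
    have : (1 : ℝ) ≤ r := by exact_mod_cast hr
    rw [div_le_one (by positivity)]
    linarith
  obtain ⟨p, a, hunit, hdefect⟩ := hrel (√δ ^ 2 / 450) (by positivity)
  have hnormalized := hunit.isNormalized_balanced hξ hη hs₀.le hs₁ (hdefect.le.trans_eq hs_sq.symm)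
  obtain ⟨c, hc, hgram, hcogram, henergy⟩ := hnormalized.exists_contractions hξ hη hr hs₀ hδr
  rw [hs_sq] at henergy
  rw [columnGram_star] at hcogram
  simp only [CStarBimodule.defectEnergy, Finset.sum_add_distrib] at henergy
  have hleft : 0 ≤ ∑ j, ‖B.defect ξ η (c j)‖ ^ 2 := Finset.sum_nonneg fun _ _ => sq_nonneg _
  have hright : 0 ≤ ∑ j, ‖B.defect η ξ (star (c j))‖ ^ 2 :=
    Finset.sum_nonneg fun _ _ => sq_nonneg _
  exact ⟨c, hc, hgram, hcogram, by linarith, by linarith⟩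

section VonNeumannAlgebra

variable {K : Type*} [NormedAddCommGroup K] [InnerProductSpace ℂ K] [CompleteSpace K]

lemma isClosed_vonNeumannAlgebra (M : VonNeumannAlgebra K) : IsClosed (M : Set (K →L[ℂ] K)) := by
  rw [← M.centralizer_centralizer]
  exact Set.isClosed_centralizer _

/-- The C⋆-algebra structure of a von Neumann algebra, whose norm is the operator norm. -/
abbrev cstarAlgebraVonNeumannAlgebra (M : VonNeumannAlgebra K) : CStarAlgebra M :=
  have : IsClosed (M.toStarSubalgebra : Set (K →L[ℂ] K)) := isClosed_vonNeumannAlgebra M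
  inferInstanceAs (CStarAlgebra M.toStarSubalgebra)

attribute [local instance] cstarAlgebraVonNeumannAlgebra

variable {M : VonNeumannAlgebra K} {E : Type*} [NormedAddCommGroup E] [InnerProductSpace ℂ E]
  [CompleteSpace E]

/-- A Hilbert bimodule over a von Neumann algebra, as a bimodule over the underlying
C⋆-algebra. -/
def HilbertBimodule.toCStarBimodule (b : HilbertBimodule M E) : CStarBimodule M E where
  L := b.L
  R := b.R
  commute x y := ContinuousLinearMap.ext fun ξ => b.commutes x y.unop ξ

lemma HilbertBimodule.AlmostRelatedPair.toCStarBimodule {b : HilbertBimodule M E} {δ : ℝ}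
    {ξ η : E} (h : b.AlmostRelatedPair δ ξ η) : b.toCStarBimodule.AlmostRelated δ ξ η := by
  intro ε hε
  obtain ⟨p, a, hLξ, -, hRξ, -, -, hLη, -, hRη, hdefect⟩ := h ε hε
  refine ⟨p, a, ⟨hLξ.le, hRξ.le, ?_, ?_⟩, hdefect⟩
  · rw [columnGram_star]
    exact hLη.le
  · rw [columnGram_star]
    exact hRη.le

end VonNeumannAlgebra

theorem lemma2_5 {K : Type*} [NormedAddCommGroup K] [InnerProductSpace ℂ K]
    [CompleteSpace K] {M : VonNeumannAlgebra K}
    {E : Type*} [NormedAddCommGroup E] [InnerProductSpace ℂ E] [CompleteSpace E]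
    (b : HilbertBimodule M E) (δ : ℝ) (hδ : 0 < δ) (r : ℕ)
    (hδr : Real.sqrt δ < 1 / (8 * r))
    (ξ η : E) (hξ : ‖ξ‖ = 1) (hη : ‖η‖ = 1) (hrel : b.AlmostRelatedPair δ ξ η) :
    ∃ c : Fin r → M,
      (∀ j, ‖c j‖ ≤ 1) ∧
      ‖b.lsmul ((∑ j, star (c j) * c j) - 1) ξ‖ ^ 2 < 12 / r ∧
      ‖b.lsmul ((∑ j, c j * star (c j)) - 1) η‖ ^ 2 < 12 / r ∧
      (∑ j, ‖b.lsmul (c j) ξ - b.rsmul η (c j)‖ ^ 2) < 32 * δ ∧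
      (∑ j, ‖b.lsmul (star (c j)) η - b.rsmul ξ (star (c j))‖ ^ 2) < 32 * δ := by
  let _ := cstarAlgebraVonNeumannAlgebra M
  exact lemma2_5_general b.toCStarBimodule hδr hξ hη hrel.toCStarBimodule
end
end
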